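/- arXiv:2006.15200 — 5 statements merged into one kernel-verified Lean document; each statement's English description precedes it below -/
import Mathlib

section
/- There is an absolute constant C > 0 such that for each ε ∈ (0,1) there exists a finite set A of integers, none equal to 0, 1, or −1, with |A| ≤ exp(C·(1/ε)·log(1/ε)), such that, as x → ∞, the number of primes p ≤ x for which no a ∈ A satisfies ℓ_a(p) > p^{1−ε} is o(x/log x). -/
open Filter Asymptotics

/-!
Take `k ≈ 2 / ε` primes `b i`. A relation `∏ i, b i ^ f i = 1` modulo `p` with `|f i| ≤ F` makes `p`
divide a nonzero integer of size `exp (O(F))`, so only `O(F ^ (k + 1))` primes admit one. Modulo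
every other prime the pigeonhole principle shows that the `b i` generate a subgroup of order
`L ≥ (F + 1) ^ k`. With `F ≈ x ^ ((1 - ε / 2) / k)` this gives `L ≥ x ^ (1 - ε / 2)` for all but
`O(x ^ (1 - ε ^ 2 / 4))` primes `p ≤ x`.

To find a single element of large order, average over the products `∏ i, b i ^ e i` with
`1 ≤ e i ≤ N`, where `N ≈ 8 / ε`. A prime `q > N` divides the index of such a product in the
subgroup with probability at most `1 / N`, so these primes lose a factor `L ^ (1 / N)` on average.
The primes `q ≤ N` lose at most the `N`-smooth part of `p - 1`, which exceeds `x ^ (ε / 4)` only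
for `O(x ^ (1 - ε / (4 * N)))` primes `p ≤ x`.

As `ε → 1` the permitted size of `A` tends to `1`; for `ε > 1 / 2` the relation argument with
`k = 1` and no averaging already suffices.
-/

/-- The logarithm of the `N`-smooth part of `n`, that is, of the largest divisor of `n` all of whose
prime factors are at most `N`. -/
noncomputable def logSmoothPart (N n : ℕ) : ℝ :=
  ∑ q ∈ n.primeFactors with q ≤ N, n.factorization q * Real.log q

lemma factorization_mul_log_nonneg (n q : ℕ) : 0 ≤ (n.factorization q * Real.log q : ℝ) :=
  mul_nonneg (Nat.cast_nonneg _) (Real.log_natCast_nonneg _)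

lemma factorization_mul_log_mono {m n : ℕ} (hmn : m ∣ n) (hn : n ≠ 0) (q : ℕ) :
    (m.factorization q * Real.log q : ℝ) ≤ n.factorization q * Real.log q := by
  have hle := (Nat.factorization_le_iff_dvd (ne_zero_of_dvd_ne_zero hn hmn) hn).mpr hmn q
  gcongr

lemma logSmoothPart_mono (N : ℕ) {m n : ℕ} (hmn : m ∣ n) (hn : n ≠ 0) :
    logSmoothPart N m ≤ logSmoothPart N n :=
  (Finset.sum_le_sum fun q _ => factorization_mul_log_mono hmn hn q).trans <|
    Finset.sum_le_sum_of_subset_of_nonneg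
      (Finset.filter_subset_filter _ (Nat.primeFactors_mono hmn hn))
      fun q _ _ => factorization_mul_log_nonneg n q

lemma log_natCast_eq_sum_primeFactors (n : ℕ) :
    Real.log n = ∑ q ∈ n.primeFactors, (n.factorization q * Real.log q : ℝ) :=
  Real.log_nat_eq_sum_factorization n

lemma log_sub_log_le_sum_primeFactors {d n : ℕ} (hdn : d ∣ n) (hn : n ≠ 0) :
    Real.log n - Real.log d ≤
      ∑ q ∈ n.primeFactors with d ∣ n / q, (n.factorization q * Real.log q : ℝ) := by
  obtain ⟨c, rfl⟩ := hdn
  obtain ⟨hd, hc⟩ := mul_ne_zero_iff.mp hn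
  have hlog : Real.log (d * c : ℕ) - Real.log d = Real.log c := by
    push_cast
    rw [Real.log_mul (mod_cast hd) (mod_cast hc), add_sub_cancel_left]
  have hsub : c.primeFactors ⊆ {q ∈ (d * c).primeFactors | d ∣ d * c / q} := fun q hq =>
    Finset.mem_filter.mpr ⟨Nat.primeFactors_mono (dvd_mul_left c d) hn hq, by
      rw [Nat.mul_div_assoc _ (Nat.dvd_of_mem_primeFactors hq)]
      exact dvd_mul_right _ _⟩
  rw [hlog, log_natCast_eq_sum_primeFactors]
  exact (Finset.sum_le_sum fun q _ => factorization_mul_log_mono (dvd_mul_left c d) hn q).trans <|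
    Finset.sum_le_sum_of_subset_of_nonneg hsub fun q _ _ => factorization_mul_log_nonneg _ q

lemma card_filter_le_pow_factorization_le {q : ℕ} (hq : 1 < q) {z : ℝ} (hz : 0 < z) (m : ℕ) :
    (({n ∈ Finset.Ioc 0 m | z ≤ (q : ℝ) ^ n.factorization q}).card : ℝ) ≤ m / z := by
  have hex : ∃ j : ℕ, z ≤ (q : ℝ) ^ j :=
    (pow_unbounded_of_one_lt z (mod_cast hq : (1 : ℝ) < q)).imp fun _ h => h.le
  have hsub : {n ∈ Finset.Ioc 0 m | z ≤ (q : ℝ) ^ n.factorization q} ⊆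
      {n ∈ Finset.Ioc 0 m | q ^ Nat.find hex ∣ n} :=
    Finset.monotone_filter_right _ fun n _ hn =>
      (pow_dvd_pow q (Nat.find_min' hex hn)).trans (Nat.ordProj_dvd n q)
  calc _ ≤ ((m / q ^ Nat.find hex : ℕ) : ℝ) := by
        rw [← Nat.Ioc_filter_dvd_card_eq_div]
        exact Nat.cast_le.mpr (Finset.card_le_card hsub)
    _ ≤ m / (q ^ Nat.find hex : ℕ) := Nat.cast_div_le
    _ ≤ m / z := by
        push_cast
        exact div_le_div_of_nonneg_left m.cast_nonneg hz (Nat.find_spec hex)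

lemma exists_le_pow_factorization_of_lt_logSmoothPart {N n : ℕ} {z : ℝ} (hz : 1 ≤ z)
    (h : N * Real.log z < logSmoothPart N n) :
    ∃ q ∈ Finset.Ioc 1 N, z ≤ (q : ℝ) ^ n.factorization q := by
  have hsub : {q ∈ n.primeFactors | q ≤ N} ⊆ Finset.Ioc 1 N := fun q hq => by
    rw [Finset.mem_filter] at hq
    exact Finset.mem_Ioc.mpr ⟨(Nat.prime_of_mem_primeFactors hq.1).one_lt, hq.2⟩
  have hcard : ({q ∈ n.primeFactors | q ≤ N}.card : ℝ) ≤ N := by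
    exact mod_cast (Finset.card_le_card hsub).trans (by simp)
  obtain ⟨q, hq, hlt⟩ : ∃ q ∈ {q ∈ n.primeFactors | q ≤ N},
      Real.log z < n.factorization q * Real.log q := by
    refine Finset.exists_lt_of_sum_lt (lt_of_le_of_lt ?_ h)
    rw [Finset.sum_const, nsmul_eq_mul]
    exact mul_le_mul_of_nonneg_right hcard (Real.log_nonneg hz)
  refine ⟨q, hsub hq, ?_⟩
  have hq0 : (0 : ℝ) < q := mod_cast (zero_lt_one.trans (Finset.mem_Ioc.mp (hsub hq)).1)
  rw [← Real.log_pow] at hlt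
  exact ((Real.log_lt_log_iff (by linarith) (by positivity)).mp hlt).le

lemma card_filter_lt_logSmoothPart_le (N m : ℕ) {z : ℝ} (hz : 1 ≤ z) :
    (({n ∈ Finset.Ioc 0 m | N * Real.log z < logSmoothPart N n}).card : ℝ) ≤ N * (m / z) := by
  have hsub : {n ∈ Finset.Ioc 0 m | N * Real.log z < logSmoothPart N n} ⊆
      (Finset.Ioc 1 N).biUnion fun q =>
        {n ∈ Finset.Ioc 0 m | z ≤ (q : ℝ) ^ n.factorization q} := fun n hn => by
    rw [Finset.mem_filter] at hn
    obtain ⟨q, hq, hle⟩ := exists_le_pow_factorization_of_lt_logSmoothPart hz hn.2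
    exact Finset.mem_biUnion.mpr ⟨q, hq, Finset.mem_filter.mpr ⟨hn.1, hle⟩⟩
  calc _ ≤ ∑ q ∈ Finset.Ioc 1 N,
        (({n ∈ Finset.Ioc 0 m | z ≤ (q : ℝ) ^ n.factorization q}).card : ℝ) := by
        rw [← Nat.cast_sum]
        exact Nat.cast_le.mpr ((Finset.card_le_card hsub).trans Finset.card_biUnion_le)
    _ ≤ ∑ _q ∈ Finset.Ioc 1 N, m / z := Finset.sum_le_sum fun q hq =>
        card_filter_le_pow_factorization_le (Finset.mem_Ioc.mp hq).1 (by linarith) m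
    _ = (N - 1 : ℕ) * (m / z) := by rw [Finset.sum_const, nsmul_eq_mul, Nat.card_Ioc]
    _ ≤ N * (m / z) := by
        gcongr
        omega

lemma card_filter_mul_log_lt_logSmoothPart_le {N : ℕ} (hN : N ≠ 0) {δ x : ℝ} (hδ : 0 ≤ δ)
    (hx : 1 ≤ x) :
    (({n ∈ Finset.Ioc 0 ⌊x⌋₊ | δ * Real.log x < logSmoothPart N n}).card : ℝ) ≤
      N * x ^ (1 - δ / N) := by
  have hx0 : 0 < x := by linarith
  have hlog : δ * Real.log x = N * Real.log (x ^ (δ / N)) := by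
    rw [Real.log_rpow hx0]
    field_simp
  rw [hlog, Real.rpow_sub hx0, Real.rpow_one]
  refine (card_filter_lt_logSmoothPart_le N _ (Real.one_le_rpow hx (by positivity))).trans ?_
  gcongr
  exact Nat.floor_le hx0.le

lemma card_primeFactors_le_of_le_two_pow {n m : ℕ} (h : n ≤ 2 ^ m) : n.primeFactors.card ≤ m := by
  obtain rfl | hn := eq_or_ne n 0
  · simp
  have htwo : 2 ^ n.primeFactors.card ≤ ∏ p ∈ n.primeFactors, p :=
    Finset.pow_card_le_prod _ _ _ fun p hp => (Nat.prime_of_mem_primeFactors hp).two_le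
  have hprod := Nat.le_of_dvd (Nat.pos_of_ne_zero hn) (Nat.prod_primeFactors_dvd n)
  exact (Nat.pow_le_pow_iff_right one_lt_two).mp (htwo.trans (hprod.trans h))

lemma natCard_coe_le_card_of_subset {α : Type*} {S : Set α} {T : Finset α} (h : S ⊆ T) :
    Nat.card S ≤ T.card :=
  (Nat.card_mono T.finite_toSet h).trans_eq (Nat.card_eq_finsetCard T)

section OrderOf

variable {ι : Type*} [Fintype ι]

lemma eq_of_prod_pow_eq_of_forall_ne {M : Type*} [CancelCommMonoid M] {a : ι → M} {i : ι}
    {u v : ι → ℕ} (hu : u i < orderOf (a i)) (hv : v i < orderOf (a i))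
    (hprod : ∏ j, a j ^ u j = ∏ j, a j ^ v j) (hne : ∀ j ≠ i, u j = v j) : u = v := by
  classical
  have hpow : a i ^ u i = a i ^ v i := by
    rw [← Finset.mul_prod_erase _ _ (Finset.mem_univ i),
      ← Finset.mul_prod_erase _ (fun j => a j ^ v j) (Finset.mem_univ i),
      Finset.prod_congr rfl fun j hj => by rw [hne j (Finset.ne_of_mem_erase hj)]] at hprod
    exact mul_right_cancel hprod
  funext j
  obtain rfl | hj := eq_or_ne j i
  · exact pow_injOn_Iio_orderOf hu hv hpow
  · exact hne j hj

/-- The least common multiple of the orders of the `g i`; in a commutative group this is the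
exponent of the subgroup they generate, and in a cyclic group it is the order of that subgroup. -/
noncomputable def lcmOrderOf {M : Type*} [Monoid M] (g : ι → M) : ℕ :=
  Finset.univ.lcm fun i => orderOf (g i)

lemma orderOf_dvd_lcmOrderOf {M : Type*} [Monoid M] (g : ι → M) (i : ι) :
    orderOf (g i) ∣ lcmOrderOf g :=
  Finset.dvd_lcm (Finset.mem_univ i)

lemma pow_lcmOrderOf {M : Type*} [Monoid M] (g : ι → M) (i : ι) : g i ^ lcmOrderOf g = 1 :=
  orderOf_dvd_iff_pow_eq_one.mp (orderOf_dvd_lcmOrderOf g i)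

lemma lcmOrderOf_dvd_natCard {G : Type*} [Group G] (g : ι → G) : lcmOrderOf g ∣ Nat.card G :=
  Finset.lcm_dvd fun i _ => orderOf_dvd_natCard (g i)

lemma lcmOrderOf_ne_zero {G : Type*} [Group G] [Finite G] (g : ι → G) : lcmOrderOf g ≠ 0 :=
  ne_zero_of_dvd_ne_zero Nat.card_pos.ne' (lcmOrderOf_dvd_natCard g)

lemma prod_pow_pow_comm {M : Type*} [CommMonoid M] (g : ι → M) (e : ι → ℕ) (m : ℕ) :
    (∏ i, g i ^ e i) ^ m = ∏ i, (g i ^ m) ^ e i := by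
  simp only [← Finset.prod_pow, pow_right_comm]

lemma orderOf_prod_pow_dvd_lcmOrderOf {M : Type*} [CommMonoid M] (g : ι → M) (e : ι → ℕ) :
    orderOf (∏ i, g i ^ e i) ∣ lcmOrderOf g :=
  orderOf_dvd_of_pow_eq_one <| by simp [prod_pow_pow_comm, pow_lcmOrderOf]

lemma exists_orderOf_pow_lcmOrderOf_div_eq {M : Type*} [Monoid M] (g : ι → M)
    (h0 : lcmOrderOf g ≠ 0) {q : ℕ} (hq : q ∈ (lcmOrderOf g).primeFactors) :
    ∃ i, orderOf (g i ^ (lcmOrderOf g / q)) = q := by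
  obtain ⟨hqp, hqd, -⟩ := Nat.mem_primeFactors.mp hq
  have : Fact q.Prime := ⟨hqp⟩
  obtain ⟨i, hi⟩ : ∃ i, ¬ orderOf (g i) ∣ lcmOrderOf g / q := by
    by_contra! hall
    exact (Nat.div_lt_self (Nat.pos_of_ne_zero h0) hqp.one_lt).not_ge <|
      Nat.le_of_dvd (Nat.div_pos (Nat.le_of_dvd (Nat.pos_of_ne_zero h0) hqd) hqp.pos)
        (Finset.lcm_dvd fun i _ => hall i)
  refine ⟨i, orderOf_eq_prime ?_ (mt orderOf_dvd_of_pow_eq_one hi)⟩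
  rw [← pow_mul, Nat.div_mul_cancel hqd, pow_lcmOrderOf]

lemma exists_prod_zpow_eq_one_of_lt {G : Type*} [CommGroup G] [IsCyclic G] [Finite G] (g : ι → G)
    {F : ℕ} (hF : lcmOrderOf g < (F + 1) ^ Fintype.card ι) :
    ∃ f : ι → ℤ, f ≠ 0 ∧ (∀ i, |f i| ≤ F) ∧ ∏ i, g i ^ f i = 1 := by
  classical
  have := Fintype.ofFinite G
  let φ : (ι → Fin (F + 1)) → G := fun u => ∏ i, g i ^ (u i : ℕ)
  have hmem : ∀ u, φ u ∈ ({a | a ^ lcmOrderOf g = 1} : Finset G) := fun u =>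
    Finset.mem_filter.mpr ⟨Finset.mem_univ _, by simp [φ, prod_pow_pow_comm, pow_lcmOrderOf]⟩
  have hcard : ({a | a ^ lcmOrderOf g = 1} : Finset G).card <
      (Finset.univ : Finset (ι → Fin (F + 1))).card := by
    refine (IsCyclic.card_pow_eq_one_le (Nat.pos_of_ne_zero (lcmOrderOf_ne_zero g))).trans_lt ?_
    simpa using hF
  obtain ⟨u, -, v, -, huv, heq⟩ :=
    Finset.exists_ne_map_eq_of_card_lt_of_maps_to hcard fun u _ => hmem u
  refine ⟨fun i => (u i : ℤ) - v i, fun h => huv (funext fun i => ?_), fun i => ?_, ?_⟩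
  · have := congrFun h i
    simp only [Pi.zero_apply] at this
    omega
  · simp only [abs_le]
    omega
  · simp only [zpow_sub, zpow_natCast, Finset.prod_mul_distrib, Finset.prod_inv_distrib]
    exact mul_inv_eq_one.mpr heq

end OrderOf

section MultIndep

variable {ι : Type*} [Fintype ι]

/-- Multiplicative independence of a family: distinct vectors of natural exponents give distinct
products. Natural exponents make the notion available in any commutative monoid. -/
def MultIndep {M : Type*} [CommMonoid M] (b : ι → M) : Prop :=
  Function.Injective fun u : ι → ℕ => ∏ i, b i ^ u i

lemma MultIndep.ne_zero {M : Type*} [CommMonoidWithZero M] {b : ι → M} (hb : MultIndep b) (i : ι) :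
    b i ≠ 0 := by
  intro hi
  have hzero : ∀ n ≠ 0, ∏ j, b j ^ n = 0 := fun n hn =>
    Finset.prod_eq_zero (Finset.mem_univ i) (by rw [hi, zero_pow hn])
  have heq : (fun _ : ι => 1) = fun _ => 2 :=
    hb ((hzero 1 one_ne_zero).trans (hzero 2 two_ne_zero).symm)
  simpa using congrFun heq i

lemma MultIndep.prod_pow_ne_one {M : Type*} [CommMonoid M] {b : ι → M} (hb : MultIndep b)
    {u : ι → ℕ} (hu : u ≠ 0) : ∏ i, b i ^ u i ≠ 1 := fun h =>
  hu (hb (by simpa using h))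

lemma multIndep_natCast_of_prime {q : ι → ℕ} (hq : ∀ i, (q i).Prime)
    (hinj : Function.Injective q) : MultIndep fun i => (q i : ℤ) := by
  intro u v huv
  have hfac : ∀ (w : ι → ℕ) (j : ι), (∏ i, q i ^ w i).factorization (q j) = w j := by
    intro w j
    rw [Nat.factorization_prod_apply fun i _ => pow_ne_zero _ (hq i).ne_zero,
      Finset.sum_eq_single j]
    · simp [(hq j).factorization]
    · intro i _ hij
      simp [(hq i).factorization, hinj.ne hij]
    · simp
  have hnat : ∏ i, q i ^ u i = ∏ i, q i ^ v i := by
    dsimp only at huv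
    exact mod_cast huv
  funext j
  rw [← hfac u j, hnat, hfac v j]

lemma multIndep_const_unit {a : ℤ} (ha : 1 < a.natAbs) : MultIndep fun _ : Unit => a := by
  intro u v huv
  funext i
  exact Int.pow_right_injective ha (by simpa using huv)

/-- The obstruction to the multiplicative relation `∏ i, b i ^ f i = 1`, with denominators cleared
so that it makes sense in a ring: the product over the positive exponents minus the product over the
negative ones. -/
def relationDefect {R : Type*} [CommRing R] (b : ι → R) (f : ι → ℤ) : R :=
  ∏ i, b i ^ (f i).toNat - ∏ i, b i ^ (-f i).toNat

lemma MultIndep.relationDefect_ne_zero {R : Type*} [CommRing R] {b : ι → R} (hb : MultIndep b)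
    {f : ι → ℤ} (hf : f ≠ 0) : relationDefect b f ≠ 0 := by
  intro h
  refine hf (funext fun i => ?_)
  have heq : (f i).toNat = (-f i).toNat := congrFun (hb (sub_eq_zero.mp h)) i
  rw [← Int.toNat_sub_toNat_neg (f i), heq, sub_self, Pi.zero_apply]

lemma map_relationDefect {R S : Type*} [CommRing R] [CommRing S] (φ : R →+* S) (b : ι → R)
    (f : ι → ℤ) : φ (relationDefect b f) = relationDefect (φ ∘ b) f := by
  simp [relationDefect]

lemma relationDefect_units_eq_zero {R : Type*} [CommRing R] {g : ι → Rˣ} {f : ι → ℤ}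
    (h : ∏ i, g i ^ f i = 1) : relationDefect (fun i => (g i : R)) f = 0 := by
  have hdiv : (∏ i, g i ^ (f i).toNat) / ∏ i, g i ^ (-f i).toNat = 1 := by
    rw [← h, ← Finset.prod_div_distrib]
    refine Finset.prod_congr rfl fun i _ => ?_
    rw [← zpow_natCast, ← zpow_natCast, div_eq_mul_inv, ← zpow_sub, Int.toNat_sub_toNat_neg]
  have hval := congrArg Units.val (div_eq_one.mp hdiv)
  push_cast at hval
  exact sub_eq_zero.mpr hval

lemma natAbs_relationDefect_le {b : ι → ℤ} (hb : ∀ i, b i ≠ 0) {F : ℕ} {f : ι → ℤ}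
    (hf : ∀ i, |f i| ≤ F) : (relationDefect b f).natAbs ≤ 2 * (∏ i, b i).natAbs ^ F := by
  have hprod : ∀ u : ι → ℕ, (∀ i, u i ≤ F) → |∏ i, b i ^ u i| ≤ |∏ i, b i| ^ F := by
    intro u hu
    simp only [Finset.abs_prod, ← Finset.prod_pow, abs_pow]
    exact Finset.prod_le_prod (fun i _ => by positivity) fun i _ =>
      pow_le_pow_right₀ (Int.one_le_abs (hb i)) (hu i)
  zify
  calc |relationDefect b f|
      ≤ |∏ i, b i ^ (f i).toNat| + |∏ i, b i ^ (-f i).toNat| := abs_sub _ _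
    _ ≤ |∏ i, b i| ^ F + |∏ i, b i| ^ F :=
        add_le_add (hprod _ fun i => Int.toNat_le.mpr (abs_le.mp (hf i)).2)
          (hprod _ fun i => Int.toNat_le.mpr (neg_le.mp (abs_le.mp (hf i)).1))
    _ = 2 * |∏ i, b i| ^ F := (two_mul _).symm

end MultIndep

section Box

variable {ι : Type*} [Fintype ι] [DecidableEq ι]

/-- The exponent vectors `e : ι → ℕ` with all entries between `1` and `N`. -/
def exponentBox (ι : Type*) [Fintype ι] [DecidableEq ι] (N : ℕ) : Finset (ι → ℕ) :=
  Fintype.piFinset fun _ => Finset.Icc 1 N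

lemma mem_exponentBox {N : ℕ} {e : ι → ℕ} :
    e ∈ exponentBox ι N ↔ ∀ i, e i ∈ Finset.Icc 1 N :=
  Fintype.mem_piFinset

lemma card_exponentBox (N : ℕ) : (exponentBox ι N).card = N ^ Fintype.card ι := by
  simp [exponentBox]

-- Fixing all exponents but the `i`-th leaves at most one choice for the latter.
lemma card_filter_prod_pow_eq_one_mul_le {M : Type*} [CancelCommMonoid M] [DecidableEq M]
    (a : ι → M) {N : ℕ} {i : ι} (hi : N < orderOf (a i)) :
    {e ∈ exponentBox ι N | ∏ j, a j ^ e j = 1}.card * N ≤ (exponentBox ι N).card := by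
  have hlt : ∀ u ∈ exponentBox ι N, u i < orderOf (a i) := fun u hu =>
    (Finset.mem_Icc.mp (mem_exponentBox.mp hu i)).2.trans_lt hi
  calc _ = ({e ∈ exponentBox ι N | ∏ j, a j ^ e j = 1} ×ˢ Finset.Icc 1 N).card := by simp
    _ ≤ _ := by
      refine Finset.card_le_card_of_injOn (fun y => Function.update y.1 i y.2) ?_ ?_
      · rintro ⟨e, t⟩ h
        simp only [Finset.coe_product, Set.mem_prod, Finset.mem_coe, Finset.mem_filter] at h
        refine mem_exponentBox.mpr fun j => ?_
        obtain rfl | hj := eq_or_ne j i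
        · simpa using h.2
        · simpa [hj] using mem_exponentBox.mp h.1.1 j
      · rintro ⟨e, s⟩ he ⟨e', s'⟩ he' hupd
        simp only [Finset.coe_product, Set.mem_prod, Finset.mem_coe, Finset.mem_filter] at he he'
        have hs : s = s' := by simpa using congrFun hupd i
        have hee : e = e' := eq_of_prod_pow_eq_of_forall_ne (hlt e he.1.1) (hlt e' he'.1.1)
          (he.1.2.trans he'.1.2.symm) fun j hj => by simpa [hj] using congrFun hupd j
        rw [hs, hee]

lemma card_filter_orderOf_dvd_mul_le {M : Type*} [CancelCommMonoid M]
    (g : ι → M) (h0 : lcmOrderOf g ≠ 0) {N q : ℕ} (hq : q ∈ (lcmOrderOf g).primeFactors)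
    (hNq : N < q) :
    {e ∈ exponentBox ι N | orderOf (∏ i, g i ^ e i) ∣ lcmOrderOf g / q}.card * N ≤
      (exponentBox ι N).card := by
  classical
  obtain ⟨i, hi⟩ := exists_orderOf_pow_lcmOrderOf_div_eq g h0 hq
  simp only [orderOf_dvd_iff_pow_eq_one, prod_pow_pow_comm]
  exact card_filter_prod_pow_eq_one_mul_le (fun j => g j ^ (lcmOrderOf g / q)) (hi ▸ hNq)

lemma sum_log_lcmOrderOf_sub_log_orderOf_le {M : Type*} [CancelCommMonoid M]
    (g : ι → M) (h0 : lcmOrderOf g ≠ 0) {N : ℕ} (hN : N ≠ 0) :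
    ∑ e ∈ exponentBox ι N, (Real.log (lcmOrderOf g) - Real.log (orderOf (∏ i, g i ^ e i))) ≤
      (exponentBox ι N).card *
        (logSmoothPart N (lcmOrderOf g) + Real.log (lcmOrderOf g) / N) := by
  set L := lcmOrderOf g
  set w : ℕ → ℝ := fun q => L.factorization q * Real.log q
  have hw : ∀ q, 0 ≤ w q := factorization_mul_log_nonneg L
  have hterm : ∀ q ∈ L.primeFactors,
      ({e ∈ exponentBox ι N | orderOf (∏ i, g i ^ e i) ∣ L / q}.card : ℝ) * w q ≤
        (exponentBox ι N).card * ((if q ≤ N then w q else 0) + w q / N) := fun q hq => by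
    split_ifs with hqN
    · have hle : w q ≤ w q + w q / N := le_add_of_nonneg_right (div_nonneg (hw q) N.cast_nonneg)
      exact mul_le_mul (Nat.cast_le.mpr (Finset.card_filter_le _ _)) hle (hw q) (Nat.cast_nonneg _)
    · have hcard : ({e ∈ exponentBox ι N | orderOf (∏ i, g i ^ e i) ∣ L / q}.card : ℝ) * N ≤
          (exponentBox ι N).card :=
        mod_cast card_filter_orderOf_dvd_mul_le g h0 hq (not_le.mp hqN)
      rw [zero_add, mul_div_left_comm, mul_comm]
      exact mul_le_mul_of_nonneg_left ((le_div_iff₀ (by positivity)).mpr hcard) (hw q)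
  calc _ ≤ ∑ e ∈ exponentBox ι N, ∑ q ∈ L.primeFactors with orderOf (∏ i, g i ^ e i) ∣ L / q, w q :=
        Finset.sum_le_sum fun e _ =>
          log_sub_log_le_sum_primeFactors (orderOf_prod_pow_dvd_lcmOrderOf g e) h0
    _ = ∑ q ∈ L.primeFactors,
          ({e ∈ exponentBox ι N | orderOf (∏ i, g i ^ e i) ∣ L / q}.card : ℝ) * w q := by
        simp only [Finset.sum_filter]
        rw [Finset.sum_comm]
        simp only [← Finset.sum_filter, Finset.sum_const, nsmul_eq_mul]
    _ ≤ ∑ q ∈ L.primeFactors,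
          (exponentBox ι N).card * ((if q ≤ N then w q else 0) + w q / N) :=
        Finset.sum_le_sum hterm
    _ = _ := by
        rw [← Finset.mul_sum, Finset.sum_add_distrib, ← Finset.sum_filter, ← Finset.sum_div,
          ← log_natCast_eq_sum_primeFactors, logSmoothPart]

theorem exists_log_lcmOrderOf_sub_log_orderOf_le {M : Type*} [CancelCommMonoid M]
    (g : ι → M) (h0 : lcmOrderOf g ≠ 0) {N : ℕ} (hN : N ≠ 0) :
    ∃ e ∈ exponentBox ι N, Real.log (lcmOrderOf g) - Real.log (orderOf (∏ i, g i ^ e i)) ≤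
      logSmoothPart N (lcmOrderOf g) + Real.log (lcmOrderOf g) / N := by
  have hne : (exponentBox ι N).Nonempty :=
    ⟨fun _ => 1, mem_exponentBox.mpr fun _ => Finset.mem_Icc.mpr ⟨le_rfl, by omega⟩⟩
  refine Finset.exists_le_of_sum_le hne ?_
  rw [Finset.sum_const, nsmul_eq_mul]
  exact sum_log_lcmOrderOf_sub_log_orderOf_le g h0 hN

/-- The primes dividing some `b i` or the `relationDefect` of some nonzero `f` with entries in
`[-F, F]`: modulo any other prime the `b i` are units without multiplicative relations of height at
most `F`. -/
noncomputable def degeneratePrimes (b : ι → ℤ) (F : ℕ) : Finset ℕ :=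
  (∏ i, b i).natAbs.primeFactors ∪
    ((Fintype.piFinset fun _ => Finset.Icc (-F : ℤ) F).erase 0).biUnion
      fun f => (relationDefect b f).natAbs.primeFactors

lemma card_degeneratePrimes_le {b : ι → ℤ} (hb : ∀ i, b i ≠ 0) (F : ℕ) :
    (degeneratePrimes b F).card ≤ (∏ i, b i).natAbs +
      (2 * F + 1) ^ Fintype.card ι * (1 + (∏ i, b i).natAbs * F) := by
  set Q := (∏ i, b i).natAbs
  have hrel : ∀ f ∈ (Fintype.piFinset fun _ : ι => Finset.Icc (-F : ℤ) F).erase 0,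
      (relationDefect b f).natAbs.primeFactors.card ≤ 1 + Q * F := fun f hf => by
    have hfF : ∀ i, |f i| ≤ F := fun i => abs_le.mpr <|
      Finset.mem_Icc.mp (Fintype.mem_piFinset.mp (Finset.mem_of_mem_erase hf) i)
    refine card_primeFactors_le_of_le_two_pow ((natAbs_relationDefect_le hb hfF).trans ?_)
    rw [pow_add, pow_one, pow_mul]
    gcongr
    exact Nat.lt_two_pow_self.le
  have hbox : ((Fintype.piFinset fun _ : ι => Finset.Icc (-F : ℤ) F).erase 0).card ≤
      (2 * F + 1) ^ Fintype.card ι := by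
    refine (Finset.card_erase_le).trans_eq ?_
    rw [Fintype.card_piFinset, Finset.prod_const, Int.card_Icc, Finset.card_univ]
    congr 1
    omega
  exact (Finset.card_union_le _ _).trans <| add_le_add
    (card_primeFactors_le_of_le_two_pow Nat.lt_two_pow_self.le)
    ((Finset.card_biUnion_le_card_mul _ _ _ hrel).trans (Nat.mul_le_mul_right _ hbox))

lemma exists_card_degeneratePrimes_floor_le {b : ι → ℤ} (hb : ∀ i, b i ≠ 0) :
    ∃ K : ℝ, 0 ≤ K ∧ ∀ y : ℝ, 1 ≤ y →
      ((degeneratePrimes b ⌊y⌋₊).card : ℝ) ≤ K * y ^ (Fintype.card ι + 1) := by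
  set k := Fintype.card ι
  set Q := (∏ i, b i).natAbs
  refine ⟨Q + 3 ^ k * (1 + Q), by positivity, fun y hy => ?_⟩
  have hF : (⌊y⌋₊ : ℝ) ≤ y := Nat.floor_le (by linarith)
  calc ((degeneratePrimes b ⌊y⌋₊).card : ℝ)
      ≤ Q + (2 * ⌊y⌋₊ + 1) ^ k * (1 + Q * ⌊y⌋₊) := mod_cast card_degeneratePrimes_le hb ⌊y⌋₊
    _ ≤ Q * y ^ (k + 1) + (3 * y) ^ k * (y + Q * y) := by
        gcongr
        · exact le_mul_of_one_le_right (Nat.cast_nonneg _) (one_le_pow₀ hy)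
        · linarith
    _ = (Q + 3 ^ k * (1 + Q)) * y ^ (k + 1) := by ring

lemma intCast_ne_zero_of_notMem_degeneratePrimes {b : ι → ℤ} (hb : MultIndep b) {F p : ℕ}
    [Fact p.Prime] (hp : p ∉ degeneratePrimes b F) (i : ι) : (b i : ZMod p) ≠ 0 := fun h =>
  hp <| Finset.mem_union_left _ <| Nat.mem_primeFactors.mpr
    ⟨Fact.out, Int.natCast_dvd.mp <|
      ((ZMod.intCast_zmod_eq_zero_iff_dvd _ _).mp h).trans
        (Finset.dvd_prod_of_mem b (Finset.mem_univ i)),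
      Int.natAbs_ne_zero.mpr (Finset.prod_ne_zero_iff.mpr fun j _ => hb.ne_zero j)⟩

lemma relationDefect_intCast_ne_zero_of_notMem_degeneratePrimes {b : ι → ℤ} (hb : MultIndep b)
    {F p : ℕ} [Fact p.Prime] (hp : p ∉ degeneratePrimes b F) {f : ι → ℤ} (hf0 : f ≠ 0)
    (hf : ∀ i, |f i| ≤ F) : relationDefect (fun i => (b i : ZMod p)) f ≠ 0 := by
  intro h
  have hcast : ((relationDefect b f : ℤ) : ZMod p) = 0 :=
    (map_relationDefect (Int.castRingHom (ZMod p)) b f).trans h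
  refine hp <| Finset.mem_union_right _ <| Finset.mem_biUnion.mpr
    ⟨f, Finset.mem_erase.mpr ⟨hf0, Fintype.mem_piFinset.mpr fun i =>
      Finset.mem_Icc.mpr (abs_le.mp (hf i))⟩, Nat.mem_primeFactors.mpr ⟨Fact.out, ?_, ?_⟩⟩
  · exact Int.natCast_dvd.mp ((ZMod.intCast_zmod_eq_zero_iff_dvd _ _).mp hcast)
  · exact Int.natAbs_ne_zero.mpr (hb.relationDefect_ne_zero hf0)

theorem exists_units_pow_card_le_lcmOrderOf {b : ι → ℤ} (hb : MultIndep b) {F p : ℕ}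
    [Fact p.Prime] (hp : p ∉ degeneratePrimes b F) :
    ∃ g : ι → (ZMod p)ˣ, (∀ i, (g i : ZMod p) = b i) ∧
      (F + 1) ^ Fintype.card ι ≤ lcmOrderOf g := by
  let g : ι → (ZMod p)ˣ := fun i =>
    Units.mk0 (b i) (intCast_ne_zero_of_notMem_degeneratePrimes hb hp i)
  refine ⟨g, fun i => rfl, ?_⟩
  by_contra! hlt
  obtain ⟨f, hf0, hf, hprod⟩ := exists_prod_zpow_eq_one_of_lt g hlt
  exact relationDefect_intCast_ne_zero_of_notMem_degeneratePrimes hb hp hf0 hf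
    (relationDefect_units_eq_zero hprod)

/-- The products `∏ i, b i ^ e i` over exponent vectors with entries between `1` and `N`. -/
def powerBox (b : ι → ℤ) (N : ℕ) : Finset ℤ :=
  (exponentBox ι N).image fun e => ∏ i, b i ^ e i

lemma card_powerBox_le (b : ι → ℤ) (N : ℕ) : (powerBox b N).card ≤ N ^ Fintype.card ι :=
  Finset.card_image_le.trans_eq (card_exponentBox N)

lemma ne_zero_one_neg_one_of_mem_powerBox [Nonempty ι] {b : ι → ℤ} (hb : MultIndep b) {N : ℕ}
    {a : ℤ} (ha : a ∈ powerBox b N) : a ≠ 0 ∧ a ≠ 1 ∧ a ≠ -1 := by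
  obtain ⟨e, he, rfl⟩ := Finset.mem_image.mp ha
  have hsq : (∏ i, b i ^ e i) ^ 2 ≠ 1 := by
    simp only [← Finset.prod_pow, ← pow_mul]
    refine hb.prod_pow_ne_one fun h => ?_
    have hpos := (Finset.mem_Icc.mp (mem_exponentBox.mp he (Classical.arbitrary ι))).1
    have := congrFun h (Classical.arbitrary ι)
    simp only [Pi.zero_apply] at this
    omega
  exact ⟨Finset.prod_ne_zero_iff.mpr fun i _ => pow_ne_zero _ (hb.ne_zero i),
    fun h => hsq (by rw [h, one_pow]), fun h => hsq (by rw [h, neg_one_sq])⟩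

theorem exists_mem_powerBox_log_orderOf_ge {b : ι → ℤ} (hb : MultIndep b) {N F p : ℕ}
    [Fact p.Prime] (hN : N ≠ 0) (hp : p ∉ degeneratePrimes b F) :
    ∃ a ∈ powerBox b N, (1 - 1 / N) * (Fintype.card ι * Real.log (F + 1)) -
      logSmoothPart N (p - 1) ≤ Real.log (orderOf (a : ZMod p)) := by
  obtain ⟨g, hg, hcard⟩ := exists_units_pow_card_le_lcmOrderOf hb hp
  obtain ⟨e, he, hle⟩ := exists_log_lcmOrderOf_sub_log_orderOf_le g (lcmOrderOf_ne_zero g) hN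
  refine ⟨∏ i, b i ^ e i, Finset.mem_image_of_mem _ he, ?_⟩
  have horder : orderOf (((∏ i, b i ^ e i : ℤ)) : ZMod p) = orderOf (∏ i, g i ^ e i) := by
    rw [← orderOf_units]
    push_cast
    simp only [hg]
  have hdvd : lcmOrderOf g ∣ p - 1 := by
    rw [← ZMod.card_units p, ← Nat.card_eq_fintype_card]
    exact lcmOrderOf_dvd_natCard g
  have hp1 : p - 1 ≠ 0 := Nat.sub_ne_zero_of_lt (Fact.out : p.Prime).one_lt
  have hlog : Fintype.card ι * Real.log (F + 1) ≤ Real.log (lcmOrderOf g) := by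
    rw [← Real.log_pow]
    exact Real.log_le_log (by positivity) (mod_cast hcard)
  have hN1 : (0 : ℝ) ≤ 1 - 1 / N := by
    rw [sub_nonneg, one_div]
    exact Nat.cast_inv_le_one N
  calc _ ≤ (1 - 1 / N) * Real.log (lcmOrderOf g) - logSmoothPart N (lcmOrderOf g) :=
        sub_le_sub (mul_le_mul_of_nonneg_left hlog hN1) (logSmoothPart_mono N hdvd hp1)
    _ ≤ Real.log (orderOf (∏ i, g i ^ e i)) := by
        rw [one_sub_mul, one_div_mul_eq_div]
        linarith
    _ = _ := by rw [horder]

end Box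

lemma rpow_isLittleO_div_log {s : ℝ} (hs : s < 1) :
    (fun x : ℝ => x ^ s) =o[atTop] fun x : ℝ => x / Real.log x := by
  have hlog := (isLittleO_log_rpow_atTop (sub_pos.mpr hs)).mul_isBigO
    (isBigO_refl (fun x : ℝ => x ^ s / Real.log x) atTop)
  refine hlog.congr' ?_ ?_
  · filter_upwards [eventually_gt_atTop 1] with x hx
    exact mul_div_cancel₀ _ (Real.log_pos hx).ne'
  · filter_upwards [eventually_gt_atTop 1] with x hx
    rw [← mul_div_assoc, ← Real.rpow_add (by linarith), sub_add_cancel, Real.rpow_one]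

lemma rpow_lt_natCast_of_mul_log_lt {x s : ℝ} (hx : 1 ≤ x) (hs : 0 ≤ s) {n : ℕ}
    (h : s * Real.log x < Real.log n) : x ^ s < n := by
  have hn : n ≠ 0 := by
    rintro rfl
    have := mul_nonneg hs (Real.log_nonneg hx)
    rw [Nat.cast_zero, Real.log_zero] at h
    linarith
  rw [← Real.log_rpow (by linarith)] at h
  exact (Real.log_lt_log_iff (by positivity) (by positivity)).mp h

lemma mul_log_le_mul_log_floor_rpow_add_one {k : ℕ} (hk : k ≠ 0) (s : ℝ) {x : ℝ} (hx : 0 < x) :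
    s * Real.log x ≤ k * Real.log (⌊x ^ (s / k)⌋₊ + 1) := by
  calc s * Real.log x = k * Real.log (x ^ (s / k)) := by
        rw [Real.log_rpow hx]
        field_simp
    _ ≤ k * Real.log (⌊x ^ (s / k)⌋₊ + 1) := by
        gcongr
        exact (Nat.lt_floor_add_one _).le

lemma one_sub_half_div_mul_succ_le {ε k N : ℝ} (hε0 : 0 < ε) (hε1 : ε ≤ 1) (hk : 2 / ε ≤ k)
    (hN : 8 / ε ≤ N) : (1 - ε / 2) / k * (k + 1) ≤ 1 - ε / 4 / N := by
  have hkpos : 0 < k := lt_of_lt_of_le (by positivity) hk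
  have hkinv : 1 / k ≤ ε / 2 := by
    rwa [one_div_le hkpos (by positivity), one_div_div]
  have hNinv : ε / 4 / N ≤ (ε / 2) ^ 2 := by
    calc ε / 4 / N ≤ ε / 4 / (8 / ε) := by gcongr
      _ = ε ^ 2 / 32 := by
          field_simp
          norm_num
      _ ≤ (ε / 2) ^ 2 := by nlinarith
  calc (1 - ε / 2) / k * (k + 1) = (1 - ε / 2) * (1 + 1 / k) := by field_simp
    _ ≤ (1 - ε / 2) * (1 + ε / 2) := by
        gcongr
        linarith
    _ = 1 - (ε / 2) ^ 2 := by ring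
    _ ≤ 1 - ε / 4 / N := by linarith

/-- The set of primes `p ≤ x` modulo which no `a` in `A` has order exceeding `p ^ (1 - ε)`. -/
def exceptionalPrimes (A : Finset ℤ) (ε x : ℝ) : Set ℕ :=
  {p : ℕ | Nat.Prime p ∧ (p : ℝ) ≤ x ∧
    ∀ a ∈ A, ¬ ((p : ℝ) ^ (1 - ε) < (orderOf ((a : ZMod p)) : ℝ))}

lemma exceptionalPrimes_singleton_subset {a : ℤ} (ha : 1 < a.natAbs) {ε : ℝ} (hε : ε ≤ 1) (x : ℝ) :
    exceptionalPrimes {a} ε x ⊆ degeneratePrimes (fun _ : Unit => a) ⌊x ^ (1 - ε)⌋₊ := by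
  rintro p ⟨hp, hpx, hpa⟩
  by_contra hdeg
  have : Fact p.Prime := ⟨hp⟩
  obtain ⟨g, hg, hcard⟩ := exists_units_pow_card_le_lcmOrderOf (multIndep_const_unit ha) hdeg
  have horder : lcmOrderOf g = orderOf (a : ZMod p) := by
    simp [lcmOrderOf, ← hg (), orderOf_units]
  refine hpa a (Finset.mem_singleton_self a) ?_
  calc (p : ℝ) ^ (1 - ε) ≤ x ^ (1 - ε) :=
        Real.rpow_le_rpow p.cast_nonneg hpx (sub_nonneg.mpr hε)
    _ < ⌊x ^ (1 - ε)⌋₊ + 1 := Nat.lt_floor_add_one _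
    _ ≤ orderOf (a : ZMod p) := by
        rw [Fintype.card_unit, pow_one, horder] at hcard
        exact mod_cast hcard

theorem natCard_exceptionalPrimes_singleton_isBigO {a : ℤ} (ha : 1 < a.natAbs) {ε : ℝ}
    (hε : ε ≤ 1) :
    (fun x : ℝ => (Nat.card (exceptionalPrimes {a} ε x) : ℝ)) =O[atTop]
      fun x : ℝ => x ^ (2 * (1 - ε)) := by
  obtain ⟨K, -, hK⟩ := exists_card_degeneratePrimes_floor_le (multIndep_const_unit ha).ne_zero
  refine IsBigO.of_bound K ?_
  filter_upwards [eventually_ge_atTop 1] with x hx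
  have hx0 : 0 ≤ x := by linarith
  rw [Real.norm_of_nonneg (Nat.cast_nonneg _), Real.norm_of_nonneg (by positivity)]
  calc (Nat.card (exceptionalPrimes {a} ε x) : ℝ)
      ≤ (degeneratePrimes (fun _ : Unit => a) ⌊x ^ (1 - ε)⌋₊).card :=
        mod_cast natCard_coe_le_card_of_subset (exceptionalPrimes_singleton_subset ha hε x)
    _ ≤ K * (x ^ (1 - ε)) ^ (Fintype.card Unit + 1) :=
        hK _ (Real.one_le_rpow hx (sub_nonneg.mpr hε))
    _ = K * x ^ (2 * (1 - ε)) := by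
        rw [← Real.rpow_mul_natCast hx0, Fintype.card_unit, mul_comm 2]
        norm_num

section PowerBox

variable {ι : Type*} [Fintype ι] [DecidableEq ι]

lemma exists_mem_powerBox_rpow_lt_orderOf {b : ι → ℤ} (hb : MultIndep b) {ε : ℝ} (hε0 : 0 < ε)
    (hε1 : ε ≤ 1) {N : ℕ} (hk : Fintype.card ι ≠ 0) (hN : 8 / ε ≤ N) {x : ℝ} (hx : 1 < x) {p : ℕ}
    [Fact p.Prime] (hdeg : p ∉ degeneratePrimes b ⌊x ^ ((1 - ε / 2) / Fintype.card ι)⌋₊)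
    (hsmooth : logSmoothPart N (p - 1) ≤ ε / 4 * Real.log x) :
    ∃ a ∈ powerBox b N, x ^ (1 - ε) < orderOf (a : ZMod p) := by
  have hlogx : 0 < Real.log x := Real.log_pos hx
  have hNpos : (0 : ℝ) < N := lt_of_lt_of_le (by positivity) hN
  obtain ⟨a, ha, hle⟩ := exists_mem_powerBox_log_orderOf_ge hb (Nat.cast_pos.mp hNpos).ne' hdeg
  have hrank := mul_log_le_mul_log_floor_rpow_add_one hk (1 - ε / 2) (zero_lt_one.trans hx)
  have hN8 : 1 / (N : ℝ) ≤ ε / 8 := by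
    rwa [one_div_le hNpos (by positivity), one_div_div]
  have hrank0 : 0 ≤ (1 - ε / 2) * Real.log x := mul_nonneg (by linarith) hlogx.le
  refine ⟨a, ha, rpow_lt_natCast_of_mul_log_lt hx.le (by linarith) ?_⟩
  calc (1 - ε) * Real.log x
      < (1 - ε / 8) * ((1 - ε / 2) * Real.log x) - ε / 4 * Real.log x := by
        nlinarith [mul_pos hε0 hlogx, mul_pos (mul_pos hε0 hε0) hlogx]
    _ ≤ (1 - 1 / N) * (Fintype.card ι *
          Real.log (⌊x ^ ((1 - ε / 2) / Fintype.card ι)⌋₊ + 1)) - logSmoothPart N (p - 1) :=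
        sub_le_sub (mul_le_mul (by linarith) hrank hrank0 (by linarith)) hsmooth
    _ ≤ Real.log (orderOf (a : ZMod p)) := hle

lemma exceptionalPrimes_powerBox_subset {b : ι → ℤ} (hb : MultIndep b) {ε : ℝ} (hε0 : 0 < ε)
    (hε1 : ε ≤ 1) {N : ℕ} (hk : Fintype.card ι ≠ 0) (hN : 8 / ε ≤ N) {x : ℝ} (hx : 1 < x) :
    exceptionalPrimes (powerBox b N) ε x ⊆
      (degeneratePrimes b ⌊x ^ ((1 - ε / 2) / Fintype.card ι)⌋₊ ∪
        {n ∈ Finset.Ioc 0 ⌊x⌋₊ | ε / 4 * Real.log x < logSmoothPart N n}.image (· + 1) :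
          Finset ℕ) := by
  rintro p ⟨hp, hpx, hpa⟩
  by_contra hcon
  obtain ⟨hdeg, himage⟩ := not_or.mp (mt Finset.mem_union.mpr hcon)
  have : Fact p.Prime := ⟨hp⟩
  have hmem : p - 1 ∈ Finset.Ioc 0 ⌊x⌋₊ :=
    Finset.mem_Ioc.mpr ⟨Nat.sub_pos_of_lt hp.one_lt, (Nat.sub_le p 1).trans (Nat.le_floor hpx)⟩
  have hsmooth : logSmoothPart N (p - 1) ≤ ε / 4 * Real.log x := not_lt.mp fun h =>
    himage (Finset.mem_image.mpr
      ⟨p - 1, Finset.mem_filter.mpr ⟨hmem, h⟩, Nat.sub_add_cancel hp.one_le⟩)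
  obtain ⟨a, ha, hlt⟩ := exists_mem_powerBox_rpow_lt_orderOf hb hε0 hε1 hk hN hx hdeg hsmooth
  exact hpa a ha <| (Real.rpow_le_rpow p.cast_nonneg hpx (by linarith)).trans_lt hlt

theorem natCard_exceptionalPrimes_powerBox_isBigO {b : ι → ℤ} (hb : MultIndep b) {ε : ℝ}
    (hε0 : 0 < ε) (hε1 : ε ≤ 1) {N : ℕ} (hk : 2 / ε ≤ Fintype.card ι) (hN : 8 / ε ≤ N) :
    (fun x : ℝ => (Nat.card (exceptionalPrimes (powerBox b N) ε x) : ℝ)) =O[atTop]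
      fun x : ℝ => x ^ (1 - ε / 4 / N) := by
  set k := Fintype.card ι
  have hkpos : (0 : ℝ) < k := lt_of_lt_of_le (by positivity) hk
  have hNpos : (0 : ℝ) < N := lt_of_lt_of_le (by positivity) hN
  obtain ⟨K, hK0, hK⟩ := exists_card_degeneratePrimes_floor_le hb.ne_zero
  refine IsBigO.of_bound (K + N) ?_
  filter_upwards [eventually_gt_atTop 1] with x hx
  have hx0 : 0 < x := by linarith
  set D := degeneratePrimes b ⌊x ^ ((1 - ε / 2) / k)⌋₊
  set S := {n ∈ Finset.Ioc 0 ⌊x⌋₊ | ε / 4 * Real.log x < logSmoothPart N n}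
  have hcover : Nat.card (exceptionalPrimes (powerBox b N) ε x) ≤ D.card + S.card :=
    (natCard_coe_le_card_of_subset (exceptionalPrimes_powerBox_subset hb hε0 hε1
      (Nat.cast_pos.mp hkpos).ne' hN hx)).trans <|
        (Finset.card_union_le _ _).trans (Nat.add_le_add_left Finset.card_image_le _)
  have hD : (D.card : ℝ) ≤ K * x ^ (1 - ε / 4 / N) := by
    refine (hK _ (Real.one_le_rpow hx.le (div_nonneg (by linarith) hkpos.le))).trans ?_
    rw [← Real.rpow_mul_natCast hx0.le, Nat.cast_add_one]
    exact mul_le_mul_of_nonneg_left (Real.rpow_le_rpow_of_exponent_le hx.le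
      (one_sub_half_div_mul_succ_le hε0 hε1 hk hN)) hK0
  have hS : (S.card : ℝ) ≤ N * x ^ (1 - ε / 4 / N) :=
    card_filter_mul_log_lt_logSmoothPart_le (Nat.cast_pos.mp hNpos).ne' (by positivity) hx.le
  rw [Real.norm_of_nonneg (Nat.cast_nonneg _), Real.norm_of_nonneg (by positivity), add_mul]
  calc (Nat.card (exceptionalPrimes (powerBox b N) ε x) : ℝ) ≤ D.card + S.card := mod_cast hcover
    _ ≤ _ := add_le_add hD hS

end PowerBox

lemma natCeil_pow_natCeil_le_exp {ε : ℝ} (hε0 : 0 < ε) (hε : ε ≤ 1 / 2) :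
    (⌈8 / ε⌉₊ : ℝ) ^ ⌈2 / ε⌉₊ ≤ Real.exp (15 * (1 / ε) * Real.log (1 / ε)) := by
  set t := 1 / ε with ht
  have ht2 : 2 ≤ t := (le_div_iff₀ hε0).mpr (by linarith)
  have hk : (⌈2 / ε⌉₊ : ℝ) ≤ 3 * t := by
    have := (Nat.ceil_lt_add_one (show 0 ≤ 2 / ε by positivity)).le
    rw [show 2 / ε = 2 * t by rw [ht]; ring] at this ⊢
    linarith
  have hN : (⌈8 / ε⌉₊ : ℝ) ≤ t ^ 5 := by
    have := (Nat.ceil_lt_add_one (show 0 ≤ 8 / ε by positivity)).le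
    rw [show 8 / ε = 8 * t by rw [ht]; ring] at this ⊢
    calc (⌈8 * t⌉₊ : ℝ) ≤ 2 ^ 4 * t := by linarith
      _ ≤ t ^ 4 * t := by gcongr
      _ = t ^ 5 := (pow_succ t 4).symm
  have hNpos : (0 : ℝ) < ⌈8 / ε⌉₊ := Nat.cast_pos.mpr (Nat.ceil_pos.mpr (by positivity))
  have hlogN : Real.log ⌈8 / ε⌉₊ ≤ 5 * Real.log t := by
    simpa [Real.log_pow] using Real.log_le_log hNpos hN
  calc (⌈8 / ε⌉₊ : ℝ) ^ ⌈2 / ε⌉₊ = Real.exp (⌈2 / ε⌉₊ * Real.log ⌈8 / ε⌉₊) := by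
        rw [Real.exp_nat_mul, Real.exp_log hNpos]
    _ ≤ Real.exp (3 * t * (5 * Real.log t)) := by gcongr
    _ = Real.exp (15 * t * Real.log t) := by ring_nf

/-- For each `ε ∈ (0,1)`, there are finite sets `𝒜` of integers (none of them
`0, 1, -1`) of size at most `exp(C (1/ε) log(1/ε))` such that, for almost all
primes `p`, some `a ∈ 𝒜` has multiplicative order mod `p` exceeding `p^(1-ε)`. -/
theorem stmt_3 :
    ∃ C : ℝ, 0 < C ∧ ∀ ε : ℝ, 0 < ε → ε < 1 →
      ∃ A : Finset ℤ,
        (∀ a ∈ A, a ≠ 0 ∧ a ≠ 1 ∧ a ≠ -1) ∧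
        (A.card : ℝ) ≤ Real.exp (C * (1 / ε) * Real.log (1 / ε)) ∧
        (fun x : ℝ => (Nat.card {p : ℕ |
            Nat.Prime p ∧ (p : ℝ) ≤ x ∧
            ∀ a ∈ A, ¬ ((p : ℝ) ^ (1 - ε) < (orderOf ((a : ZMod p)) : ℝ))} : ℝ))
          =o[atTop] (fun x : ℝ => x / Real.log x) := by
  refine ⟨15, by norm_num, fun ε h0 h1 => ?_⟩
  obtain hε | hε := lt_or_ge (1 / 2) ε
  · have hlog : 0 ≤ Real.log (1 / ε) := Real.log_nonneg ((one_le_div h0).mpr h1.le)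
    refine ⟨{2}, by simp, ?_, ?_⟩
    · simpa using Real.one_le_exp (show 0 ≤ 15 * (1 / ε) * Real.log (1 / ε) by positivity)
    · exact (natCard_exceptionalPrimes_singleton_isBigO (by norm_num) h1.le).trans_isLittleO
        (rpow_isLittleO_div_log (by linarith))
  · set k := ⌈2 / ε⌉₊
    set N := ⌈8 / ε⌉₊
    have : NeZero k := ⟨(Nat.ceil_pos.mpr (by positivity)).ne'⟩
    let b : Fin k → ℤ := fun i => Nat.nth Nat.Prime i
    have hb : MultIndep b :=
      multIndep_natCast_of_prime (fun i => Nat.prime_nth_prime i) fun i j hij =>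
        Fin.ext (Nat.nth_injective Nat.infinite_setOfPred_prime hij)
    refine ⟨powerBox b N, fun a ha => ne_zero_one_neg_one_of_mem_powerBox hb ha, ?_, ?_⟩
    · refine le_trans ?_ (natCeil_pow_natCeil_le_exp h0 hε)
      simpa using Nat.cast_le (α := ℝ).mpr (card_powerBox_le b N)
    · exact (natCard_exceptionalPrimes_powerBox_isBigO hb h0 h1.le (by simpa using Nat.le_ceil _)
        (Nat.le_ceil _)).trans_isLittleO (rpow_isLittleO_div_log (sub_lt_self _ (by positivity)))
end

section
/- Let p be a prime and let a be an integer not divisible by p. If ℓ_a(p) > p^{3/4}, then there exist positive integers m and n such that p divides a^m + a^n + 1. -/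
/-!
Fix `c ≠ 0` and consider the hyperplanes `{x | x ⬝ᵥ y = c}`, `y ≠ 0`, in a vector space `V` over a
field of `q` elements. They all have `|V| / q` points, and two distinct ones share at most
`|V| / q ^ 2` points, so as events they are pairwise non-positively correlated. By Cauchy–Schwarz,
`N` such hyperplanes must therefore cover all but few points: a set `S` missed by all of them has
`|S| * N ≤ q * |V|`.

Let `H` be the group of powers of `a`, of order `t`. If no sum of two elements of `H` equals `c`,
then, `H` being closed under multiplication, `x ⬝ᵥ y = c` has no solution with `x` and `y` both in
`H × H`. Hence `t ^ 2 * t ^ 2 ≤ q * q ^ 2`.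
-/

open Finset Module

section DoubleCounting

variable {α ι : Type*} [Fintype α] [DecidableEq α]

lemma sum_card_filter_mem_sq (I : Finset ι) (B : ι → Finset α) :
    ∑ x, #{i ∈ I | x ∈ B i} ^ 2 = ∑ i ∈ I, ∑ j ∈ I, #(B i ∩ B j) := by
  have card_sq (x : α) : #{i ∈ I | x ∈ B i} ^ 2 = #{ij ∈ I ×ˢ I | x ∈ B ij.1 ∩ B ij.2} := by
    simp only [mem_inter, sq, ← card_product, ← filter_product]
  calc ∑ x, #{i ∈ I | x ∈ B i} ^ 2
      = ∑ ij ∈ I ×ˢ I, #{x | x ∈ B ij.1 ∩ B ij.2} := by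
        simp only [card_sq]
        exact sum_card_bipartiteAbove_eq_sum_card_bipartiteBelow _
    _ = ∑ i ∈ I, ∑ j ∈ I, #(B i ∩ B j) := by
        simp only [filter_univ_mem, sum_product]

variable {I : Finset ι} {B : ι → Finset α} {k : ℕ}

lemma card_mul_sum_card_inter_le (hk : ∀ i ∈ I, #(B i) = k)
    (hB : (I : Set ι).Pairwise fun i j ↦ Fintype.card α * #(B i ∩ B j) ≤ k ^ 2) :
    Fintype.card α * ∑ i ∈ I, ∑ j ∈ I, #(B i ∩ B j) ≤
      #I * (Fintype.card α * k) + (#I * k) ^ 2 := by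
  classical
  have pair_le {i j : ι} (hi : i ∈ I) (hj : j ∈ I) :
      Fintype.card α * #(B i ∩ B j) ≤ (if i = j then Fintype.card α * k else 0) + k ^ 2 := by
    obtain rfl | hij := eq_or_ne i j
    · simp [hk i hi]
    · simpa [hij] using hB hi hj hij
  calc Fintype.card α * ∑ i ∈ I, ∑ j ∈ I, #(B i ∩ B j)
      ≤ ∑ i ∈ I, ∑ j ∈ I, ((if i = j then Fintype.card α * k else 0) + k ^ 2) := by
        simp only [mul_sum]
        exact sum_le_sum fun i hi ↦ sum_le_sum fun j hj ↦ pair_le hi hj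
    _ = #I * (Fintype.card α * k) + (#I * k) ^ 2 := by
        simp only [sum_add_distrib, sum_ite_eq, sum_ite_mem, inter_self, sum_const, smul_eq_mul]
        ring

theorem card_mul_card_mul_le_of_disjoint (hk : ∀ i ∈ I, #(B i) = k)
    (hB : (I : Set ι).Pairwise fun i j ↦ Fintype.card α * #(B i ∩ B j) ≤ k ^ 2)
    {S : Finset α} (hS : ∀ i ∈ I, Disjoint S (B i)) :
    #S * #I * k ≤ #Sᶜ * Fintype.card α := by
  set n := Fintype.card α
  set N := #I
  set degree : α → ℕ := fun x ↦ #{i ∈ I | x ∈ B i}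
  have degree_eq_zero {x : α} (hx : x ∈ S) : degree x = 0 :=
    card_filter_eq_zero_iff.2 fun i hi ↦ disjoint_left.1 (hS i hi) hx
  have sum_degree : ∑ x ∈ Sᶜ, degree x = N * k := by
    calc ∑ x ∈ Sᶜ, degree x = ∑ x, degree x :=
          sum_subset (subset_univ _) fun x _ hx ↦ degree_eq_zero (by simpa using hx)
      _ = ∑ i ∈ I, #{x | x ∈ B i} := sum_card_bipartiteAbove_eq_sum_card_bipartiteBelow _
      _ = N * k := by simp only [filter_univ_mem, sum_congr rfl hk, sum_const, smul_eq_mul, N]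
  have cauchy_schwarz : (N * k) ^ 2 ≤ #Sᶜ * ∑ x, degree x ^ 2 := by
    calc (N * k) ^ 2 = (∑ x ∈ Sᶜ, degree x) ^ 2 := by rw [sum_degree]
      _ ≤ #Sᶜ * ∑ x ∈ Sᶜ, degree x ^ 2 := sq_sum_le_card_mul_sum_sq
      _ ≤ #Sᶜ * ∑ x, degree x ^ 2 := by gcongr; exact subset_univ _
  have second_moment : n * ∑ x, degree x ^ 2 ≤ N * (n * k) + (N * k) ^ 2 := by
    rw [sum_card_filter_mem_sq]
    exact card_mul_sum_card_inter_le hk hB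
  have card_eq : #S + #Sᶜ = n := card_add_card_compl S
  have card_mul_sq_le : n * (N * k) ^ 2 ≤ #Sᶜ * (N * (n * k) + (N * k) ^ 2) := by
    calc n * (N * k) ^ 2 ≤ n * (#Sᶜ * ∑ x, degree x ^ 2) := by gcongr
      _ = #Sᶜ * (n * ∑ x, degree x ^ 2) := by ring
      _ ≤ #Sᶜ * (N * (n * k) + (N * k) ^ 2) := by gcongr
  obtain hNk | hNk := (N * k).eq_zero_or_pos
  · simp [mul_assoc, hNk]
  · refine Nat.le_of_mul_le_mul_right ?_ hNk
    linear_combination card_mul_sq_le + (N * k) ^ 2 * card_eq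

end DoubleCounting

lemma card_fiber_mul_card_of_surjective {G M F : Type*} [AddGroup G] [Fintype G]
    [AddMonoid M] [Fintype M] [DecidableEq M] [FunLike F G M] [AddMonoidHomClass F G M]
    {f : F} (hf : Function.Surjective f) (y : M) :
    #{x | f x = y} * Fintype.card M = Fintype.card G := by
  calc #{x | f x = y} * Fintype.card M = ∑ _z : M, #{x | f x = y} := by
        rw [sum_const, smul_eq_mul, mul_comm, card_univ]
    _ = ∑ z, #{x | f x = z} := sum_congr rfl fun z _ ↦
        AddMonoidHom.card_fiber_eq_of_mem_range f (hf y) (hf z)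
    _ = Fintype.card G := (card_eq_sum_card_fiberwise fun x _ ↦ mem_univ (f x)).symm

lemma dual_prod_surjective_of_apply_eq {K V : Type*} [Field K] [AddCommGroup V] [Module K V]
    {φ ψ : Dual K V} (hne : φ ≠ ψ) {v : V} (hv : φ v ≠ 0) (heq : φ v = ψ v) :
    Function.Surjective (φ.prod ψ) := by
  obtain ⟨w, hw⟩ := LinearMap.surjective (sub_ne_zero.2 hne) 1
  rw [LinearMap.sub_apply] at hw
  rintro ⟨a, b⟩
  refine ⟨((a - (a - b) * φ w) / φ v) • v + (a - b) • w, Prod.ext ?_ ?_⟩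
  · change φ _ = a
    rw [map_add, map_smul, map_smul, smul_eq_mul, smul_eq_mul, div_mul_cancel₀ _ hv]
    ring
  · change ψ _ = b
    rw [map_add, map_smul, map_smul, smul_eq_mul, smul_eq_mul, ← heq, div_mul_cancel₀ _ hv]
    linear_combination (b - a) * hw

section Hyperplanes

variable {K : Type*} [Field K] [Fintype K] {c : K}

section Dual

variable {V : Type*} [AddCommGroup V] [Module K V] [Fintype V]

lemma card_hyperplane_inter_mul_card_sq_le [DecidableEq K] (hc : c ≠ 0) {φ ψ : Dual K V}
    (hne : φ ≠ ψ) : #{v | φ v = c ∧ ψ v = c} * Fintype.card K ^ 2 ≤ Fintype.card V := by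
  obtain hempty | ⟨v, hv⟩ := ({v | φ v = c ∧ ψ v = c} : Finset V).eq_empty_or_nonempty
  · simp [hempty]
  · obtain ⟨hφ, hψ⟩ := (mem_filter_univ v).1 hv
    have hsurj := dual_prod_surjective_of_apply_eq hne (hφ ▸ hc) (hφ.trans hψ.symm)
    simpa [Prod.ext_iff, sq] using (card_fiber_mul_card_of_surjective hsurj (c, c)).le

theorem card_mul_card_le_of_forall_dual_apply_ne [DecidableEq V] (hc : c ≠ 0) {S : Finset V}
    {T : Finset (Dual K V)} (hT : 0 ∉ T) (hST : ∀ v ∈ S, ∀ φ ∈ T, φ v ≠ c) :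
    #S * #T ≤ Fintype.card K * #Sᶜ := by
  classical
  obtain rfl | ⟨φ₀, hφ₀⟩ := T.eq_empty_or_nonempty
  · simp
  set q := Fintype.card K
  set hyperplane : Dual K V → Finset V := fun φ ↦ {v | φ v = c}
  set k := #(hyperplane φ₀)
  have card_hyperplane {φ : Dual K V} (hφ : φ ∈ T) : #(hyperplane φ) * q = Fintype.card V :=
    card_fiber_mul_card_of_surjective (LinearMap.surjective (ne_of_mem_of_not_mem hφ hT)) c
  have hq : 0 < q := Fintype.card_pos
  have hk : 0 < k := Nat.pos_of_mul_pos_right (card_hyperplane hφ₀ ▸ Fintype.card_pos)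
  have card_eq : ∀ φ ∈ T, #(hyperplane φ) = k := fun φ hφ ↦
    Nat.eq_of_mul_eq_mul_right hq ((card_hyperplane hφ).trans (card_hyperplane hφ₀).symm)
  have correlation : (T : Set (Dual K V)).Pairwise fun φ ψ ↦
      Fintype.card V * #(hyperplane φ ∩ hyperplane ψ) ≤ k ^ 2 := fun φ _ ψ _ hne ↦ by
    have card_inter_le : #(hyperplane φ ∩ hyperplane ψ) * q ^ 2 ≤ Fintype.card V := by
      rw [← filter_and]
      exact card_hyperplane_inter_mul_card_sq_le hc hne
    refine Nat.le_of_mul_le_mul_right ?_ (pow_pos hq 2)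
    calc Fintype.card V * #(hyperplane φ ∩ hyperplane ψ) * q ^ 2
        = Fintype.card V * (#(hyperplane φ ∩ hyperplane ψ) * q ^ 2) := by ring
      _ ≤ Fintype.card V * Fintype.card V := by gcongr
      _ = k ^ 2 * q ^ 2 := by rw [← card_hyperplane hφ₀]; ring
  have disjoint : ∀ φ ∈ T, Disjoint S (hyperplane φ) := fun φ hφ ↦
    disjoint_left.2 fun v hv hvφ ↦ hST v hv φ hφ ((mem_filter_univ v).1 hvφ)
  refine Nat.le_of_mul_le_mul_right ?_ hk
  calc #S * #T * k ≤ #Sᶜ * Fintype.card V :=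
        card_mul_card_mul_le_of_disjoint card_eq correlation disjoint
    _ = q * #Sᶜ * k := by rw [← card_hyperplane hφ₀]; ring

end Dual

variable {ι : Type*} [Fintype ι]

theorem exists_dotProduct_eq_of_card_lt (hc : c ≠ 0) {S T : Finset (ι → K)} (hT : 0 ∉ T)
    (hST : Fintype.card K ^ (Fintype.card ι + 1) < #S * #T) :
    ∃ x ∈ S, ∃ y ∈ T, x ⬝ᵥ y = c := by
  classical
  by_contra! hne
  refine hST.not_ge ?_
  calc #S * #T = #S * #(T.map (dotProductEquiv K ι).toEquiv.toEmbedding) := by rw [card_map]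
    _ ≤ Fintype.card K * #Sᶜ :=
        card_mul_card_le_of_forall_dual_apply_ne hc (by simpa using hT)
          (fun x hx ↦ forall_mem_map.2 fun y hy ↦ (dotProduct_comm y x).trans_ne (hne x hx y hy))
    _ ≤ Fintype.card K * Fintype.card (ι → K) := by gcongr; exact card_le_univ _
    _ = Fintype.card K ^ (Fintype.card ι + 1) := by rw [Fintype.card_fun, pow_succ']

end Hyperplanes

section Subgroup

variable {K ι : Type*} [Field K] [Finite K] [Fintype ι] {c : K}

theorem exists_sum_units_eq_of_card_lt (hc : c ≠ 0) {H : Subgroup Kˣ}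
    (hcard : Nat.card K ^ (Fintype.card ι + 1) < Nat.card H ^ (2 * Fintype.card ι)) :
    ∃ x : ι → Kˣ, (∀ i, x i ∈ H) ∧ ∑ i, (x i : K) = c := by
  classical
  have := Fintype.ofFinite K
  obtain hι | hι := isEmpty_or_nonempty ι
  · simp at hcard
  set val : (ι → Kˣ) ↪ (ι → K) := ⟨fun u i ↦ u i, Units.val_injective.comp_left⟩
  set S : Finset (ι → K) := (Fintype.piFinset fun _ ↦ (H : Set Kˣ).toFinset).map val
  have card_S : #S = Nat.card H ^ Fintype.card ι := by simp [S, Nat.card_eq_fintype_card]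
  have zero_notMem : 0 ∉ S := by simp [S, val, funext_iff]
  obtain ⟨x, hx, y, hy, hxy⟩ : ∃ x ∈ S, ∃ y ∈ S, x ⬝ᵥ y = c := by
    refine exists_dotProduct_eq_of_card_lt hc zero_notMem ?_
    rwa [card_S, ← pow_add, ← two_mul, ← Nat.card_eq_fintype_card]
  obtain ⟨u, hu, rfl⟩ := mem_map.1 hx
  obtain ⟨v, hv, rfl⟩ := mem_map.1 hy
  simp only [Fintype.mem_piFinset, Set.mem_toFinset, SetLike.mem_coe] at hu hv
  exact ⟨u * v, fun i ↦ mul_mem (hu i) (hv i), hxy⟩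

theorem exists_sum_pow_eq_of_card_lt (hc : c ≠ 0) {a : K}
    (ha : Nat.card K ^ (Fintype.card ι + 1) < orderOf a ^ (2 * Fintype.card ι)) :
    ∃ m : ι → ℕ, (∀ i, 0 < m i) ∧ ∑ i, a ^ m i = c := by
  obtain rfl | ha₀ := eq_or_ne a 0
  · rw [orderOf_zero] at ha
    exact absurd (ha.trans_le (pow_le_one₀ le_rfl zero_le_one))
      (Nat.one_le_pow _ _ Nat.card_pos).not_gt
  lift a to Kˣ using ha₀.isUnit
  rw [orderOf_units, ← Nat.card_zpowers] at ha
  obtain ⟨x, hx, hsum⟩ := exists_sum_units_eq_of_card_lt hc ha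
  choose k hk using fun i ↦ mem_powers_iff_mem_zpowers.2 (hx i)
  refine ⟨fun i ↦ k i + orderOf a, fun i ↦ Nat.add_pos_right _ (orderOf_pos a), ?_⟩
  simpa only [← Units.val_pow_eq_pow_val, pow_add, pow_orderOf_eq_one, mul_one, hk,
    Units.val_one] using hsum

end Subgroup

theorem stmt_10_general {K : Type*} [Field K] [Finite K] {a c : K} (hc : c ≠ 0)
    (h : (Nat.card K : ℝ) ^ ((3 : ℝ) / 4) < (orderOf a : ℝ)) :
    ∃ m n : ℕ, 0 < m ∧ 0 < n ∧ a ^ m + a ^ n = c := by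
  have hcard : Nat.card K ^ 3 < orderOf a ^ 4 := by
    have hpow := pow_lt_pow_left₀ h (by positivity) four_ne_zero
    have exponent_eq : (3 : ℝ) / 4 * (4 : ℕ) = (3 : ℕ) := by norm_num
    rw [← Real.rpow_mul_natCast (by positivity), exponent_eq, Real.rpow_natCast] at hpow
    exact_mod_cast hpow
  obtain ⟨m, hm, hsum⟩ := exists_sum_pow_eq_of_card_lt (ι := Fin 2) hc (by simpa using hcard)
  exact ⟨m 0, m 1, hm 0, hm 1, by rwa [Fin.sum_univ_two] at hsum⟩

/-- **Skałba's lemma.** Let `p` be a prime and `a` an integer not divisible by `p`.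
If the multiplicative order of `a` mod `p` exceeds `p^(3/4)`, then `p` divides
`a^m + a^n + 1` for some positive integers `m, n`. -/
theorem stmt_10 (p : ℕ) (hp : Nat.Prime p) (a : ℤ) (hpa : ¬ (p : ℤ) ∣ a)
    (h : (p : ℝ) ^ ((3 : ℝ) / 4) < (orderOf ((a : ZMod p)) : ℝ)) :
    ∃ m n : ℕ, 0 < m ∧ 0 < n ∧ (p : ℤ) ∣ a ^ m + a ^ n + 1 := by
  have : Fact p.Prime := ⟨hp⟩
  simpa [← ZMod.intCast_zmod_eq_zero_iff_dvd, eq_neg_iff_add_eq_zero] using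
    stmt_10_general (a := (a : ZMod p)) (neg_ne_zero.2 one_ne_zero) (by simpa using h)
end

section
/- Let p be a prime and let q be a prime with q > 3, q dividing p−1, and q² not dividing p−1. Let a and b be integers not divisible by p. If q divides ℓ_a(p)·ℓ_b(p), then q divides at least four of the five numbers ℓ_a(p), ℓ_b(p), ℓ_{ab}(p), ℓ_{a²b}(p), ℓ_{ab²}(p). -/
/-!
For a prime `q`, the elements of finite order prime to `q` in a commutative group form a subgroup
`H`, and `x ^ d ∈ H` forces `x ∈ H` whenever `d` is prime to `q`. If two monomials `a ^ i * b ^ j`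
and `a ^ k * b ^ l` lie in `H`, then Cramer's rule puts `a ^ d` and `b ^ d` in `H`, where
`d = i * l - j * k`. The five exponent vectors `(1, 0), (0, 1), (1, 1), (2, 1), (1, 2)` have
pairwise determinants `±1, ±2, ±3`, all prime to `q` if `q > 3`; so once `a` or `b` is outside `H`,
at most one of the five monomials is inside.
-/

theorem length_le_countP_add_one_of_pairwise_or {α : Type*} {P : α → Bool} {l : List α}
    (h : l.Pairwise fun x y ↦ P x ∨ P y) : l.length ≤ l.countP P + 1 := by
  induction l with
  | nil => simp
  | cons x l ih =>
    rw [List.pairwise_cons] at h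
    by_cases hx : P x
    · simpa [hx] using ih h.2
    · have tail_all : l.countP P = l.length :=
        List.countP_eq_length.mpr fun y hy ↦ (h.1 y hy).resolve_left hx
      simp [hx, tail_all]

theorem dvd_orderOf_zpow_of_isCoprime {G : Type*} [Group G] {x : G} {q : ℕ} {n : ℤ}
    (hn : IsCoprime (q : ℤ) n) (hx : q ∣ orderOf x) : q ∣ orderOf (x ^ n) := by
  have order_dvd : (orderOf x : ℤ) ∣ n * orderOf (x ^ n) := by
    rw [orderOf_dvd_iff_zpow_eq_one, zpow_mul, zpow_natCast, pow_orderOf_eq_one]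
  exact Int.natCast_dvd_natCast.mp
    (hn.dvd_of_dvd_mul_left ((Int.natCast_dvd_natCast.mpr hx).trans order_dvd))

section CommGroup

variable {G : Type*} [CommGroup G]

theorem zpow_det_mem {H : Subgroup G} {a b : G} {i j k l : ℤ}
    (h₁ : a ^ i * b ^ j ∈ H) (h₂ : a ^ k * b ^ l ∈ H) : a ^ (i * l - j * k) ∈ H := by
  have eliminate_b : a ^ (i * l - j * k) = (a ^ i * b ^ j) ^ l / (a ^ k * b ^ l) ^ j := by
    rw [mul_zpow, mul_zpow, ← zpow_mul, ← zpow_mul, ← zpow_mul, ← zpow_mul, mul_comm l j,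
      mul_div_mul_right_eq_div, mul_comm k j, zpow_sub, div_eq_mul_inv]
  rw [eliminate_b]
  exact H.div_mem (H.zpow_mem h₁ l) (H.zpow_mem h₂ j)

/-- The prime-to-`q` torsion subgroup. Since `orderOf x = 0` when `x` has infinite order, and
`q ∣ 0`, elements of infinite order are excluded. -/
def primeToTorsion (G : Type*) [CommGroup G] (q : ℕ) [hq : Fact q.Prime] : Subgroup G where
  carrier := {x | ¬ q ∣ orderOf x}
  one_mem' := by simpa using hq.out.one_lt.ne'
  mul_mem' {x y} hx hy hxy :=
    (hq.out.dvd_mul.mp (hxy.trans (Commute.all x y).orderOf_mul_dvd_mul_orderOf)).elim hx hy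
  inv_mem' {x} hx := by simpa using hx

variable {q : ℕ} [hq : Fact q.Prime] {a b : G}

theorem mem_primeToTorsion {x : G} : x ∈ primeToTorsion G q ↔ ¬ q ∣ orderOf x := Iff.rfl

theorem mem_primeToTorsion_of_zpow_mem {x : G} {n : ℤ} (hn : IsCoprime (q : ℤ) n)
    (h : x ^ n ∈ primeToTorsion G q) : x ∈ primeToTorsion G q :=
  fun hx ↦ h (dvd_orderOf_zpow_of_isCoprime hn hx)

theorem dvd_orderOf_or_dvd_orderOf_of_isCoprime_det {i j k l : ℤ}
    (hdet : IsCoprime (q : ℤ) (i * l - j * k)) (hdiv : q ∣ orderOf a * orderOf b) :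
    q ∣ orderOf (a ^ i * b ^ j) ∨ q ∣ orderOf (a ^ k * b ^ l) := by
  by_contra! ⟨h₁, h₂⟩
  rw [← mem_primeToTorsion] at h₁ h₂
  have ha : a ∈ primeToTorsion G q := mem_primeToTorsion_of_zpow_mem hdet (zpow_det_mem h₁ h₂)
  have hb : b ∈ primeToTorsion G q := by
    rw [mul_comm] at h₁ h₂
    refine mem_primeToTorsion_of_zpow_mem hdet ?_
    simpa only [mul_comm l i, mul_comm k j] using zpow_det_mem h₂ h₁
  exact (hq.out.dvd_mul.mp hdiv).elim ha hb

theorem length_le_countP_dvd_orderOf_add_one {L : List (ℤ × ℤ)}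
    (hL : L.Pairwise fun v w ↦ IsCoprime (q : ℤ) (v.1 * w.2 - v.2 * w.1))
    (hdiv : q ∣ orderOf a * orderOf b) :
    L.length ≤ L.countP (fun v ↦ q ∣ orderOf (a ^ v.1 * b ^ v.2)) + 1 :=
  length_le_countP_add_one_of_pairwise_or <| hL.imp fun hdet ↦ by
    simpa only [decide_eq_true_eq] using dvd_orderOf_or_dvd_orderOf_of_isCoprime_det hdet hdiv

theorem stmt_11_general (hq3 : 3 < q) (hdiv : q ∣ orderOf a * orderOf b) :
    4 ≤ [orderOf a, orderOf b, orderOf (a * b), orderOf (a ^ 2 * b),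
      orderOf (a * b ^ 2)].countP (fun m ↦ decide (q ∣ m)) := by
  have isCoprime_of_small (d : ℤ) (hd : d ≠ 0 ∧ |d| ≤ 3) : IsCoprime (q : ℤ) d :=
    (Nat.prime_iff_prime_int.mp hq.out).coprime_iff_not_dvd.mpr fun h ↦
      hd.1 (Int.eq_zero_of_abs_lt_dvd h (by omega))
  have small_dets : [((1 : ℤ), (0 : ℤ)), (0, 1), (1, 1), (2, 1), (1, 2)].Pairwise
      fun v w ↦ v.1 * w.2 - v.2 * w.1 ≠ 0 ∧ |v.1 * w.2 - v.2 * w.1| ≤ 3 := by decide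
  have count := length_le_countP_dvd_orderOf_add_one
    (small_dets.imp fun h ↦ isCoprime_of_small _ h) hdiv
  simpa [List.countP_cons, zpow_ofNat] using count

end CommGroup

/-- Let `p` be a prime and `q` a prime with `q > 3`, `q ∣ p - 1`, `q² ∤ p - 1`. Let
`a, b` be integers not divisible by `p`. If `q ∣ ℓ_a(p)·ℓ_b(p)`, then `q` divides at
least four of the five numbers `ℓ_a(p), ℓ_b(p), ℓ_{ab}(p), ℓ_{a²b}(p), ℓ_{ab²}(p)`. -/
theorem stmt_11 (p q : ℕ) (hp : Nat.Prime p) (hq : Nat.Prime q) (hq3 : 3 < q)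
    (hqp : q ∣ p - 1) (hq2 : ¬ q ^ 2 ∣ p - 1) (a b : ℤ)
    (hpa : ¬ (p : ℤ) ∣ a) (hpb : ¬ (p : ℤ) ∣ b)
    (hdiv : q ∣ orderOf ((a : ZMod p)) * orderOf ((b : ZMod p))) :
    4 ≤ ([orderOf ((a : ZMod p)), orderOf ((b : ZMod p)),
          orderOf (((a * b : ℤ) : ZMod p)), orderOf (((a ^ 2 * b : ℤ) : ZMod p)),
          orderOf (((a * b ^ 2 : ℤ) : ZMod p))].countP (fun m => decide (q ∣ m))) := by
  have : Fact p.Prime := ⟨hp⟩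
  have : Fact q.Prime := ⟨hq⟩
  have ha : (a : ZMod p) ≠ 0 := by rwa [Ne, ZMod.intCast_zmod_eq_zero_iff_dvd]
  have hb : (b : ZMod p) ≠ 0 := by rwa [Ne, ZMod.intCast_zmod_eq_zero_iff_dvd]
  simpa [← orderOf_units] using stmt_11_general (a := Units.mk0 _ ha) (b := Units.mk0 _ hb) hq3
    (by simpa [← orderOf_units] using hdiv)
end

section
/- Let p be a prime, N a positive integer, and q a prime with q > N, q dividing p−1, and q² not dividing p−1. Let a_1,…,a_k be integers not divisible by p, and suppose q divides ℓ_{a_i}(p) for some i. Then the number of tuples (e_1,…,e_k) of integers with 0 ≤ e_j < N for each j, not all e_j = 0, such that q does not divide ℓ_{a_1^{e_1}⋯a_k^{e_k}}(p), is at most N^{k−1} − 1. -/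
/-! For commuting `x` and `y`, if `x * y ^ n` and `x * y ^ m` have order prime to `q`, with `n ≤ m`,
then so does `y ^ (m - n)`, because the order of a factor divides the lcm of the orders of the other
factor and of the product. If moreover `q` divides the order of `y`, then `q ∣ m - n`. So, when `q`
divides the order of `a i`, the exponents away from `i` determine the exponent `e i < N ≤ q` of any
tuple whose product has order prime to `q`. This leaves at most `N ^ (k - 1)` tuples, among them the
zero tuple.

Since `orderOf` is `0` at elements of infinite order, `¬ q ∣ orderOf x` includes that `x` has finite
order. -/

open Finset

section Monoid

variable {M : Type*} [Monoid M] {x y : M} {q n : ℕ}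

theorem orderOf_dvd_mul_orderOf_pow (x : M) (n : ℕ) : orderOf x ∣ n * orderOf (x ^ n) :=
  orderOf_dvd_of_pow_eq_one <| by rw [pow_mul, pow_orderOf_eq_one]

theorem dvd_of_dvd_orderOf_of_not_dvd_orderOf_pow (hq : q.Prime) (hx : q ∣ orderOf x)
    (hxn : ¬ q ∣ orderOf (x ^ n)) : q ∣ n :=
  (hq.dvd_mul.1 (hx.trans (orderOf_dvd_mul_orderOf_pow x n))).resolve_right hxn

theorem not_dvd_orderOf_of_not_dvd_orderOf_mul (hq : q.Prime) (hxy : Commute x y)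
    (hx : ¬ q ∣ orderOf x) (hmul : ¬ q ∣ orderOf (x * y)) : ¬ q ∣ orderOf y := fun hy =>
  (hq.dvd_lcm.1 (hy.trans hxy.orderOf_dvd_lcm_mul)).elim hx hmul

theorem subsingleton_setOf_lt_not_dvd_orderOf_mul_pow (hq : q.Prime) (hxy : Commute x y)
    (hy : q ∣ orderOf y) : {n | n < q ∧ ¬ q ∣ orderOf (x * y ^ n)}.Subsingleton := by
  rintro n ⟨hnq, hn⟩ m ⟨hmq, hm⟩
  wlog hnm : n ≤ m generalizing n m
  · exact (this hmq hm hnq hn (le_of_not_ge hnm)).symm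
  have hcomm : Commute (x * y ^ n) (y ^ (m - n)) :=
    (hxy.pow_right _).mul_left (Commute.pow_pow_self y _ _)
  have hsplit : x * y ^ m = x * y ^ n * y ^ (m - n) := by
    rw [mul_assoc, ← pow_add, Nat.add_sub_cancel' hnm]
  have hdiff : q ∣ m - n :=
    dvd_of_dvd_orderOf_of_not_dvd_orderOf_pow hq hy
      (not_dvd_orderOf_of_not_dvd_orderOf_mul hq hcomm hn (hsplit ▸ hm))
  have hzero : m - n = 0 := Nat.eq_zero_of_dvd_of_lt hdiff (by lia)
  lia

end Monoid

theorem card_le_prod_of_injOn_restrict {ι : Type*} [Fintype ι] [DecidableEq ι] {α : ι → Type*}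
    {s : ∀ j, Finset (α j)} {S : Finset (∀ j, α j)} {P : ι → Prop} [DecidablePred P]
    (hS : S ⊆ Fintype.piFinset s)
    (hinj : Set.InjOn (fun (e : ∀ j, α j) (j : {j // P j}) => e j) S) :
    #S ≤ ∏ j : {j // P j}, #(s j) := by
  rw [← Fintype.card_piFinset]
  refine card_le_card_of_injOn _ (fun e he => ?_) hinj
  exact Fintype.mem_piFinset.2 fun j => Fintype.mem_piFinset.1 (hS he) j

section CommMonoid

variable {M ι : Type*} [CommMonoid M] [Fintype ι] {q N : ℕ} {a : ι → M}

theorem injOn_restrict_ne_of_dvd_orderOf (hq : q.Prime) {i : ι} (hi : q ∣ orderOf (a i)) :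
    Set.InjOn (fun (e : ι → ℕ) (j : {j // j ≠ i}) => e j)
      {e | e i < q ∧ ¬ q ∣ orderOf (∏ j, a j ^ e j)} := by
  classical
  rintro e ⟨hei, he⟩ f ⟨hfi, hf⟩ hef
  have hne : ∀ j ≠ i, e j = f j := fun j hj => congrFun hef ⟨j, hj⟩
  have hrest : ∏ j ∈ {i}ᶜ, a j ^ e j = ∏ j ∈ {i}ᶜ, a j ^ f j :=
    prod_congr rfl fun j hj => by rw [hne j (by simpa using hj)]
  rw [Fintype.prod_eq_prod_compl_mul i] at he hf
  have hi_eq : e i = f i :=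
    subsingleton_setOf_lt_not_dvd_orderOf_mul_pow hq (Commute.all _ _) hi
      ⟨hei, he⟩ ⟨hfi, hrest ▸ hf⟩
  funext j
  obtain rfl | hj := eq_or_ne j i
  exacts [hi_eq, hne j hj]

theorem card_filter_not_dvd_orderOf_prod_pow_le [DecidableEq ι] (hq : q.Prime)
    (hNq : N ≤ q) (ha : ∃ i, q ∣ orderOf (a i)) :
    #{e ∈ Fintype.piFinset fun _ : ι => range N | ¬ q ∣ orderOf (∏ i, a i ^ e i)}
      ≤ N ^ (Fintype.card ι - 1) := by
  obtain ⟨i, hi⟩ := ha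
  refine (card_le_prod_of_injOn_restrict (P := (· ≠ i)) (filter_subset _ _)
    ((injOn_restrict_ne_of_dvd_orderOf hq hi).mono fun e he => ?_)).trans_eq (by simp)
  obtain ⟨heN, he⟩ := mem_filter.1 he
  exact ⟨(mem_range.1 (Fintype.mem_piFinset.1 heN i)).trans_le hNq, he⟩

theorem stmt_12_general [DecidableEq ι] (hq : q.Prime) (hN : 0 < N) (hNq : N ≤ q)
    (ha : ∃ i, q ∣ orderOf (a i)) :
    #{e ∈ Fintype.piFinset fun _ : ι => range N |
        (¬ ∀ j, e j = 0) ∧ ¬ q ∣ orderOf (∏ i, a i ^ e i)}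
      < N ^ (Fintype.card ι - 1) := by
  refine (card_lt_card ?_).trans_le (card_filter_not_dvd_orderOf_prod_pow_le hq hNq ha)
  refine (ssubset_iff_of_subset (monotone_filter_right _ fun e _ he => he.2)).2 ⟨0, ?_, by simp⟩
  simp [hN, hq.ne_one]

end CommMonoid

/-- Let `p` be a prime, `N` a positive integer, and `q` a prime with `q > N`,
`q ∣ p - 1`, `q² ∤ p - 1`. Let `a₁, …, a_k` be integers not divisible by `p`, and
suppose `q ∣ ℓ_{aᵢ}(p)` for some `i`. Then the number of tuples `(e₁, …, e_k)` with
`0 ≤ eⱼ < N`, not all `eⱼ = 0`, such that `q ∤ ℓ_{a₁^{e₁}⋯a_k^{e_k}}(p)`, is at most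
`N^{k-1} - 1`. -/
theorem stmt_12 (p q N k : ℕ) (hp : Nat.Prime p) (hq : Nat.Prime q) (hN : 0 < N)
    (hqN : N < q) (hqp : q ∣ p - 1) (hq2 : ¬ q ^ 2 ∣ p - 1)
    (a : Fin k → ℤ) (hpa : ∀ i, ¬ (p : ℤ) ∣ a i)
    (hex : ∃ i, q ∣ orderOf ((a i : ZMod p))) :
    ((Fintype.piFinset (fun _ : Fin k => Finset.range N)).filter (fun e =>
        (¬ ∀ j, e j = 0) ∧ ¬ q ∣ orderOf (((∏ i, a i ^ e i : ℤ) : ZMod p)))).card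
      ≤ N ^ (k - 1) - 1 := by
  simpa using Nat.le_sub_one_of_lt (stmt_12_general hq hN hqN.le hex)
end

section
/- Fix an integer a with a ∉ {0, 1, −1}. Then, as x → ∞, the number of primes p ≤ x with ℓ_a(p) ≤ x^{1/2}/log x is o(x/log x). In particular, all but o(x/log x) primes p ≤ x satisfy ℓ_a(p) > p^{1/2}/log p. -/
open Filter Asymptotics

/-!
A prime `p` for which `a` has order `n` modulo `p` divides `a ^ n - 1`. Hence every prime modulo
which the order of `a` is at most `Y` divides the product `a * ∏ n ∈ [1, Y], (a ^ n - 1)`, the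
leading factor accounting for the primes dividing `a`. For `|a| ≥ 2` this product is
nonzero and at most `|a| ^ ((Y + 1) ^ 2)` in absolute value, so it has only `O(Y ^ 2)` prime
factors, which is `O(x / log² x)` for `Y = √x / log x`. Replacing the threshold `√x / log x` by
`√p / log p` adds only finitely many primes, because `√x / log x` is nondecreasing for `x ≥ exp 2`.
-/

lemma two_pow_card_primeFactors_le {n : ℕ} (hn : n ≠ 0) : 2 ^ n.primeFactors.card ≤ n :=
  calc
    2 ^ n.primeFactors.card ≤ ∏ p ∈ n.primeFactors, p :=
      Finset.pow_card_le_prod _ _ _ fun _ hp => (Nat.prime_of_mem_primeFactors hp).two_le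
    _ ≤ n := Nat.le_of_dvd hn.pos (Nat.prod_primeFactors_dvd n)

lemma pow_sub_one_ne_zero_of_one_lt_natAbs {a : ℤ} (ha : 1 < a.natAbs) {n : ℕ} (hn : n ≠ 0) :
    a ^ n - 1 ≠ 0 := by
  intro h
  have h_natAbs : a.natAbs ^ n = 1 := by rw [← Int.natAbs_pow, sub_eq_zero.1 h, Int.natAbs_one]
  exact (Nat.one_lt_pow hn ha).ne' h_natAbs

lemma natAbs_pow_sub_one_le {a : ℤ} (ha : 1 < a.natAbs) (n : ℕ) :
    (a ^ n - 1).natAbs ≤ a.natAbs ^ (n + 1) :=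
  calc
    (a ^ n - 1).natAbs ≤ a.natAbs ^ n + 1 := by
      simpa only [Int.natAbs_pow, Int.natAbs_one] using Int.natAbs_sub_le (a ^ n) 1
    _ ≤ a.natAbs ^ (n + 1) := Nat.pow_lt_pow_right ha n.lt_succ_self

/-- The integer `a * (a - 1) * (a ^ 2 - 1) * ⋯ * (a ^ Y - 1)`, whose prime divisors include all
primes modulo which the order of `a` is at most `Y`. The factor `a` is there because `orderOf` is
`0` modulo the primes dividing `a`. -/
def orderProduct (a : ℤ) (Y : ℕ) : ℤ :=
  a * ∏ n ∈ Finset.Icc 1 Y, (a ^ n - 1)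

/-- The set of primes `p` modulo which the order of `a` is at most `y`. It contains the primes
dividing `a` when `0 ≤ y`, since `orderOf` is `0` there. -/
def smallOrderPrimes (a : ℤ) (y : ℝ) : Set ℕ :=
  {p | p.Prime ∧ (orderOf (a : ZMod p) : ℝ) ≤ y}

lemma intCast_dvd_pow_orderOf_sub_one (a : ℤ) (m : ℕ) :
    (m : ℤ) ∣ a ^ orderOf (a : ZMod m) - 1 := by
  rw [← ZMod.intCast_zmod_eq_zero_iff_dvd]
  push_cast
  rw [pow_orderOf_eq_one, sub_self]

lemma intCast_dvd_orderProduct {a : ℤ} {p Y : ℕ} (hp : p.Prime)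
    (hY : orderOf (a : ZMod p) ≤ Y) : (p : ℤ) ∣ orderProduct a Y := by
  have : Fact p.Prime := ⟨hp⟩
  by_cases hpa : (p : ℤ) ∣ a
  · exact hpa.mul_right _
  · have ha : (a : ZMod p) ≠ 0 := by rwa [Ne, ZMod.intCast_zmod_eq_zero_iff_dvd]
    have h_pos : 0 < orderOf (a : ZMod p) :=
      Nat.pos_of_dvd_of_pos (ZMod.orderOf_dvd_card_sub_one ha) (Nat.sub_pos_of_lt hp.one_lt)
    have h_factor : a ^ orderOf (a : ZMod p) - 1 ∣ ∏ n ∈ Finset.Icc 1 Y, (a ^ n - 1) :=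
      Finset.dvd_prod_of_mem (fun n => a ^ n - 1) (Finset.mem_Icc.2 ⟨h_pos, hY⟩)
    exact ((intCast_dvd_pow_orderOf_sub_one a p).trans h_factor).mul_left a

lemma orderProduct_ne_zero {a : ℤ} (ha : 1 < a.natAbs) (Y : ℕ) : orderProduct a Y ≠ 0 :=
  mul_ne_zero (Int.natAbs_pos.1 (by omega)) <| Finset.prod_ne_zero_iff.2 fun _ hn =>
    pow_sub_one_ne_zero_of_one_lt_natAbs ha (Nat.one_le_iff_ne_zero.1 (Finset.mem_Icc.1 hn).1)

lemma natAbs_orderProduct_le {a : ℤ} (ha : 1 < a.natAbs) (Y : ℕ) :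
    (orderProduct a Y).natAbs ≤ a.natAbs ^ ((Y + 1) ^ 2) := by
  have h_factor : ∀ n ∈ Finset.Icc 1 Y, (a ^ n - 1).natAbs ≤ a.natAbs ^ (Y + 1) := fun n hn =>
    (natAbs_pow_sub_one_le ha n).trans <|
      Nat.pow_le_pow_right (by omega) (Nat.succ_le_succ (Finset.mem_Icc.1 hn).2)
  have h_prod : (∏ n ∈ Finset.Icc 1 Y, (a ^ n - 1)).natAbs =
      ∏ n ∈ Finset.Icc 1 Y, (a ^ n - 1).natAbs := map_prod Int.natAbsHom _ _
  calc
    (orderProduct a Y).natAbs = a.natAbs * ∏ n ∈ Finset.Icc 1 Y, (a ^ n - 1).natAbs := by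
      rw [orderProduct, Int.natAbs_mul, h_prod]
    _ ≤ a.natAbs * (a.natAbs ^ (Y + 1)) ^ Y := by
      gcongr
      simpa only [Nat.card_Icc, Nat.add_sub_cancel] using Finset.prod_le_pow_card _ _ _ h_factor
    _ = a.natAbs ^ (1 + (Y + 1) * Y) := by rw [← pow_mul, pow_add, pow_one]
    _ ≤ a.natAbs ^ ((Y + 1) ^ 2) := Nat.pow_le_pow_right (by omega) (by nlinarith)

lemma card_primeFactors_orderProduct_le {a : ℤ} (ha : 1 < a.natAbs) (Y : ℕ) :
    (orderProduct a Y).natAbs.primeFactors.card ≤ Nat.clog 2 a.natAbs * (Y + 1) ^ 2 := by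
  refine (Nat.pow_le_pow_iff_right one_lt_two).1 ?_
  calc
    2 ^ (orderProduct a Y).natAbs.primeFactors.card ≤ (orderProduct a Y).natAbs :=
      two_pow_card_primeFactors_le (Int.natAbs_ne_zero.2 (orderProduct_ne_zero ha Y))
    _ ≤ a.natAbs ^ ((Y + 1) ^ 2) := natAbs_orderProduct_le ha Y
    _ ≤ (2 ^ Nat.clog 2 a.natAbs) ^ ((Y + 1) ^ 2) := by
      gcongr
      exact Nat.le_pow_clog one_lt_two _
    _ = 2 ^ (Nat.clog 2 a.natAbs * (Y + 1) ^ 2) := (pow_mul _ _ _).symm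

lemma smallOrderPrimes_subset_primeFactors {a : ℤ} (ha : 1 < a.natAbs) (y : ℝ) :
    smallOrderPrimes a y ⊆ (orderProduct a ⌊y⌋₊).natAbs.primeFactors := by
  rintro p ⟨hp, h_order⟩
  exact Nat.mem_primeFactors.2
    ⟨hp, Int.natCast_dvd.1 (intCast_dvd_orderProduct hp (Nat.le_floor h_order)),
      Int.natAbs_ne_zero.2 (orderProduct_ne_zero ha _)⟩

lemma finite_smallOrderPrimes {a : ℤ} (ha : 1 < a.natAbs) (y : ℝ) : (smallOrderPrimes a y).Finite :=
  (Finset.finite_toSet _).subset (smallOrderPrimes_subset_primeFactors ha y)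

lemma ncard_smallOrderPrimes_le {a : ℤ} (ha : 1 < a.natAbs) (y : ℝ) :
    (smallOrderPrimes a y).ncard ≤ Nat.clog 2 a.natAbs * (⌊y⌋₊ + 1) ^ 2 :=
  calc
    (smallOrderPrimes a y).ncard ≤ (orderProduct a ⌊y⌋₊).natAbs.primeFactors.card := by
      rw [← Set.ncard_coe_finset]
      exact Set.ncard_le_ncard (smallOrderPrimes_subset_primeFactors ha y) (Finset.finite_toSet _)
    _ ≤ Nat.clog 2 a.natAbs * (⌊y⌋₊ + 1) ^ 2 := card_primeFactors_orderProduct_le ha _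

theorem isBigO_ncard_smallOrderPrimes {a : ℤ} (ha : 1 < a.natAbs) {α : Type*} (l : Filter α)
    (y : α → ℝ) :
    (fun t => ((smallOrderPrimes a (y t)).ncard : ℝ)) =O[l] fun t => y t ^ 2 + 1 := by
  refine IsBigO.of_bound (2 * Nat.clog 2 a.natAbs) (Eventually.of_forall fun t => ?_)
  have h_floor : (⌊y t⌋₊ : ℝ) ≤ |y t| :=
    (Nat.cast_le.2 (Nat.floor_mono (le_abs_self _))).trans (Nat.floor_le (abs_nonneg _))
  rw [Real.norm_of_nonneg (Nat.cast_nonneg _), Real.norm_of_nonneg (by positivity)]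
  calc
    ((smallOrderPrimes a (y t)).ncard : ℝ) ≤ Nat.clog 2 a.natAbs * (⌊y t⌋₊ + 1 : ℝ) ^ 2 := by
      exact_mod_cast ncard_smallOrderPrimes_le ha (y t)
    _ ≤ Nat.clog 2 a.natAbs * (|y t| + 1) ^ 2 := by gcongr
    _ ≤ Nat.clog 2 a.natAbs * (2 * (y t ^ 2 + 1)) := by
      gcongr
      nlinarith [sq_nonneg (|y t| - 1), sq_abs (y t)]
    _ = 2 * Nat.clog 2 a.natAbs * (y t ^ 2 + 1) := by ring

theorem isLittleO_natCard_of_subset_smallOrderPrimes_union {a : ℤ} (ha : 1 < a.natAbs)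
    {α : Type*} {l : Filter α} {T : α → Set ℕ} {y g : α → ℝ} {F : Set ℕ} (hF : F.Finite)
    (hT : ∀ᶠ t in l, T t ⊆ smallOrderPrimes a (y t) ∪ F)
    (hy : (fun t => y t ^ 2) =o[l] g) (hg : (fun _ => (1 : ℝ)) =o[l] g) :
    (fun t => (Nat.card (T t) : ℝ)) =o[l] g := by
  have h_card : (fun t => (Nat.card (T t) : ℝ)) =O[l]
      fun t => ((smallOrderPrimes a (y t)).ncard : ℝ) + F.ncard := by
    refine IsBigO.of_norm_eventuallyLE (hT.mono fun t ht => ?_)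
    simp only [Real.norm_natCast, Nat.card_coe_set_eq]
    exact_mod_cast (Set.ncard_le_ncard ht ((finite_smallOrderPrimes ha _).union hF)).trans
      (Set.ncard_union_le _ _)
  have h_small : (fun t => ((smallOrderPrimes a (y t)).ncard : ℝ)) =o[l] g :=
    (isBigO_ncard_smallOrderPrimes ha l y).trans_isLittleO (hy.add hg)
  have h_const : (fun _ => (F.ncard : ℝ)) =o[l] g :=
    (isBigO_const_const (F.ncard : ℝ) one_ne_zero l).trans_isLittleO hg
  exact h_card.trans_isLittleO (h_small.add h_const)

lemma setOf_orderOf_le_subset_smallOrderPrimes_union (a : ℤ) {f : ℝ → ℝ} {b : ℝ}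
    (hf : MonotoneOn f (Set.Ici b)) (x : ℝ) :
    {p : ℕ | p.Prime ∧ (p : ℝ) ≤ x ∧ (orderOf (a : ZMod p) : ℝ) ≤ f p} ⊆
      smallOrderPrimes a (f x) ∪ Set.Iio ⌈b⌉₊ := by
  rintro p ⟨hp, hpx, h_order⟩
  rcases lt_or_ge (p : ℝ) b with hpb | hbp
  · exact Or.inr (Nat.lt_ceil.2 hpb)
  · exact Or.inl ⟨hp, h_order.trans (hf hbp (hbp.trans hpx) hpx)⟩

lemma monotoneOn_sqrt_div_log :
    MonotoneOn (fun x : ℝ => √x / Real.log x) (Set.Ici (Real.exp 2)) := by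
  intro x hx y hy hxy
  have hy_one : 1 < y := (Real.one_lt_exp_iff.2 two_pos).trans_le hy
  have h_pos : 0 < Real.log y / √y :=
    div_pos (Real.log_pos hy_one) (Real.sqrt_pos.2 (one_pos.trans hy_one))
  simpa only [inv_div] using inv_anti₀ h_pos (Real.log_div_sqrt_antitoneOn hx hy hxy)

lemma isLittleO_one_div_log :
    (fun _ : ℝ => (1 : ℝ)) =o[atTop] fun x : ℝ => x / Real.log x := by
  refine (Real.isLittleO_log_id_atTop.mul_isBigO (isBigO_refl (fun x => (Real.log x)⁻¹) _)).congr'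
    ?_ EventuallyEq.rfl
  filter_upwards [eventually_gt_atTop 1] with x hx using mul_inv_cancel₀ (Real.log_pos hx).ne'

lemma isLittleO_sq_sqrt_div_log :
    (fun x : ℝ => (√x / Real.log x) ^ 2) =o[atTop] fun x : ℝ => x / Real.log x := by
  have h_inv : (fun x => (Real.log x)⁻¹) =o[atTop] fun _ : ℝ => (1 : ℝ) :=
    (isLittleO_one_iff ℝ).2 Real.tendsto_log_atTop.inv_tendsto_atTop
  refine ((isBigO_refl (fun x : ℝ => x / Real.log x) atTop).mul_isLittleO h_inv).congr' ?_ ?_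
  · filter_upwards [eventually_ge_atTop 0] with x hx
    rw [div_pow, Real.sq_sqrt hx, sq, ← div_eq_mul_inv, div_div]
  · exact Eventually.of_forall fun x => mul_one _

/-- Fix an integer `a ∉ {0, ±1}`. The number of primes `p ≤ x` with
`ℓ_a(p) ≤ x^(1/2)/log x` is `o(x/log x)`; in particular, all but `o(x/log x)` of the
primes `p ≤ x` satisfy `ℓ_a(p) > p^(1/2)/log p`. -/
theorem stmt_13 (a : ℤ) (h0 : a ≠ 0) (h1 : a ≠ 1) (h2 : a ≠ -1) :
    ((fun x : ℝ => (Nat.card {p : ℕ |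
        Nat.Prime p ∧ (p : ℝ) ≤ x ∧
        (orderOf ((a : ZMod p)) : ℝ) ≤ x ^ ((1 : ℝ) / 2) / Real.log x} : ℝ))
      =o[atTop] (fun x : ℝ => x / Real.log x)) ∧
    ((fun x : ℝ => (Nat.card {p : ℕ |
        Nat.Prime p ∧ (p : ℝ) ≤ x ∧
        ¬ ((p : ℝ) ^ ((1 : ℝ) / 2) / Real.log p < (orderOf ((a : ZMod p)) : ℝ))} : ℝ))
      =o[atTop] (fun x : ℝ => x / Real.log x)) := by
  have ha : 1 < a.natAbs := by omega
  simp only [← Real.sqrt_eq_rpow, not_lt]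
  constructor
  · refine isLittleO_natCard_of_subset_smallOrderPrimes_union ha Set.finite_empty ?_
      isLittleO_sq_sqrt_div_log isLittleO_one_div_log
    exact Eventually.of_forall fun x p ⟨hp, _, h_order⟩ => Or.inl ⟨hp, h_order⟩
  · have h_subset := setOf_orderOf_le_subset_smallOrderPrimes_union a monotoneOn_sqrt_div_log
    exact isLittleO_natCard_of_subset_smallOrderPrimes_union ha (Set.finite_Iio _)
      (Eventually.of_forall h_subset) isLittleO_sq_sqrt_div_log isLittleO_one_div_log
end
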